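/- Recovery sequence with prescribed affine boundary values (Step 1 of the proof of Proposition 3.11 of the paper): assume Assumption H and Assumption A:2T. For every F ∈ ℝ^{n×d} there exists a set Ω' ∈ ℱ with ℙ(Ω') = 1 such that for every ω ∈ Ω', every affine map g : ℝ^d → ℝⁿ with Jacobian F, and every half-open axis-parallel box A ⊂ ℝ^d, there exists a family (u_ε)_{ε>0} of functions u_ε : εℤ^d → ℝⁿ satisfying: (i) u_ε(z) = g(z) for every z ∈ εℤ^d with dist(z, ℝ^d∖A) ≤ εR; (ii) lim_{ε↓0} ε^d Σ_{z∈εℤ^d∩A} |u_ε(z) − g(z)|^{pβ/(β+1)} = 0; (iii) lim_{ε↓0} E_ε(ω;u_ε,A) = |A| · W₀(F). -/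

import Mathlib

open MeasureTheory Filter Metric Set
open scoped Classical
open scoped ENNReal Topology Pointwise

noncomputable section

namespace StochHom

/-- `ℝ^d` with the Euclidean norm. -/
abbrev Rd (d : ℕ) : Type := EuclideanSpace ℝ (Fin d)

/-- `ℝ^n` with the Euclidean norm. -/
abbrev Rn (n : ℕ) : Type := EuclideanSpace ℝ (Fin n)

/-- The lattice `ℤ^d`. -/
abbrev Zd (d : ℕ) : Type := Fin d → ℤ

variable {d n : ℕ}

/-- The embedding of the lattice `ℤ^d` into `ℝ^d`. -/
def toRd (z : Zd d) : Rd d := (EuclideanSpace.equiv (Fin d) ℝ).symm fun i => (z i : ℝ)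

/-- The standard basis vectors `eᵢ` of `ℤ^d`. -/
def stdb (i : Fin d) : Zd d := fun j => if j = i then 1 else 0

/-- The interaction range `R = max {4√d, max_{b ∈ ℰ₀} |b|}`. -/
def irange (d : ℕ) (E0 : Finset (Zd d)) : ℝ :=
  max (4 * Real.sqrt d) (sSup ((fun b : Zd d => ‖toRd b‖) '' (E0 : Set (Zd d))))

variable {Ω : Type*} [MeasurableSpace Ω]

/-- The energy `E₁(ω; u, ℤ^d ∩ A)`. -/
def energy1 (τ : Zd d → Ω → Ω) (E0 : Finset (Zd d)) (V : Zd d → Ω → Rn n → ℝ)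
    (ω : Ω) (u : Zd d → Rn n) (A : Set (Rd d)) : ℝ :=
  ∑' z : Zd d, if toRd z ∈ A then
      ∑ b ∈ E0, V b (τ z ω) ((‖toRd b‖)⁻¹ • (u (z + b) - u z)) else 0

/-- The scaled energy `E_ε(ω; u, A)`, where a function `u : εℤ^d → ℝ^n` is identified with a
function on `ℤ^d` via `z ↦ u(εz)`, so that `∂_b^ε u (z) = (u (z+b) - u z)/(ε |b|)`. -/
def energyE (τ : Zd d → Ω → Ω) (E0 : Finset (Zd d)) (V : Zd d → Ω → Rn n → ℝ)
    (ε : ℝ) (ω : Ω) (u : Zd d → Rn n) (A : Set (Rd d)) : ℝ :=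
  ε ^ d * ∑' z : Zd d, if ε • toRd z ∈ A then
      ∑ b ∈ E0, V b (τ z ω) ((ε * ‖toRd b‖)⁻¹ • (u (z + b) - u z)) else 0

/-- The localized minimal energy `m_F(ω; A)`. -/
def mF (τ : Zd d → Ω → Ω) (E0 : Finset (Zd d)) (V : Zd d → Ω → Rn n → ℝ)
    (ω : Ω) (F : Rd d →L[ℝ] Rn n) (A : Set (Rd d)) : ℝ :=
  ⨅ φ : {φ : Zd d → Rn n // ∀ z : Zd d, infDist (toRd z) Aᶜ ≤ irange d E0 → φ z = 0},
    energy1 τ E0 V ω (fun z => F (toRd z) + φ.1 z) A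

/-- The half-open cube `[0,k)^d ⊂ ℝ^d`. -/
def cube (d k : ℕ) : Set (Rd d) := {x | ∀ i, 0 ≤ x i ∧ x i < (k : ℝ)}

/-- The homogenized energy density `W₀(F) = inf_{k ≥ 1} k⁻ᵈ E[m_F(·, [0,k)^d)]`. -/
def W0 (P : Measure Ω) (τ : Zd d → Ω → Ω) (E0 : Finset (Zd d))
    (V : Zd d → Ω → Rn n → ℝ) (F : Rd d →L[ℝ] Rn n) : ℝ :=
  ⨅ k : {k : ℕ // 0 < k}, (((k : ℕ) : ℝ) ^ d)⁻¹ * ∫ ω, mF τ E0 V ω F (cube d k) ∂P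

/-- Half-open axis-parallel box `Π_i [aᵢ, bᵢ)`. -/
def halfBox (a b : Fin d → ℝ) : Set (Rd d) := {x | ∀ i, a i ≤ x i ∧ x i < b i}

/-- Open axis-parallel box `Π_i (aᵢ, bᵢ)`. -/
def openBox (a b : Fin d → ℝ) : Set (Rd d) := {x | ∀ i, a i < x i ∧ x i < b i}

/-- Closed axis-parallel box `Π_i [aᵢ, bᵢ]`. -/
def closedBox (a b : Fin d → ℝ) : Set (Rd d) := {x | ∀ i, a i ≤ x i ∧ x i ≤ b i}

/-- Half-open axis-parallel box with integer corners. -/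
def intBox (a b : Zd d) : Set (Rd d) := {x | ∀ i, (a i : ℝ) ≤ x i ∧ x i < (b i : ℝ)}

/-- The periodic cell minimization `W^{(k)}(ω; F)`. -/
def Wper (τ : Zd d → Ω → Ω) (E0 : Finset (Zd d)) (V : Zd d → Ω → Rn n → ℝ)
    (k : ℕ) (ω : Ω) (F : Rd d →L[ℝ] Rn n) : ℝ :=
  ⨅ φ : {φ : Zd d → Rn n // ∀ z z' : Zd d, φ (z + k • z') = φ z},
    ((k : ℝ) ^ d)⁻¹ * energy1 τ E0 V ω (fun z => F (toRd z) + φ.1 z) (cube d k)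

/-- Integer box. -/
def ibox (L M : Zd d) : Finset (Zd d) := Fintype.piFinset fun i => Finset.Ico (L i) (M i)

theorem mem_ibox {L M z : Zd d} : z ∈ ibox L M ↔ ∀ i, L i ≤ z i ∧ z i < M i := by
  simp [ibox, Fintype.mem_piFinset]

theorem card_ibox (L M : Zd d) :
    ((ibox L M).card : ℝ) = ∏ i, max ((M i : ℝ) - L i) 0 := by
  unfold ibox
  rw [Fintype.card_piFinset]
  push_cast
  refine Finset.prod_congr rfl fun i _ => ?_
  rw [Int.card_Ico]
  have : (((M i - L i).toNat : ℤ) : ℝ) = ((max (M i - L i) 0 : ℤ) : ℝ) := by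
    rw [Int.toNat_eq_max]
  rw [Int.cast_natCast] at this
  rw [this]; push_cast; rfl

theorem sum_ibox_shift {E : Type*} [AddCommMonoid E] (L M w : Zd d) (f : Zd d → E) :
    ∑ z ∈ ibox L M, f (z + w) = ∑ z ∈ ibox (L + w) (M + w), f z := by
  refine Finset.sum_bij' (fun z _ => z + w) (fun z _ => z - w) ?_ ?_ ?_ ?_ ?_
  · intro z hz
    rw [mem_ibox] at hz ⊢
    intro i
    have := hz i
    simp only [Pi.add_apply]
    omega
  · intro z hz
    rw [mem_ibox] at hz ⊢
    intro i
    have := hz i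
    simp only [Pi.add_apply, Pi.sub_apply] at this ⊢
    omega
  · intro z _; simp
  · intro z _; simp
  · intro z _; rfl

/-- Convergence of rescaled corners. -/
def CornerTo (L : ℝ → Zd d) (a : Fin d → ℝ) : Prop :=
  ∀ i, Tendsto (fun ε : ℝ => ε * (L ε i : ℝ)) (𝓝[>] 0) (𝓝 (a i))

theorem CornerTo.add {L : ℝ → Zd d} {a : Fin d → ℝ} (h : CornerTo L a) (w : Zd d) :
    CornerTo (fun ε => L ε + w) a := by
  intro i
  have h1 : Tendsto (fun ε : ℝ => ε * (w i : ℝ)) (𝓝[>] 0) (𝓝 (0 * (w i : ℝ))) :=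
    (tendsto_nhdsWithin_of_tendsto_nhds tendsto_id).mul_const _
  have := (h i).add h1
  simp only [zero_mul, add_zero] at this
  refine this.congr fun ε => ?_
  simp; ring

theorem CornerTo.sup {L L' : ℝ → Zd d} {a : Fin d → ℝ} (h : CornerTo L a) (h' : CornerTo L' a) :
    CornerTo (fun ε => L ε ⊔ L' ε) a := by
  intro i
  have := (h i).max (h' i)
  rw [max_self] at this
  refine this.congr' ?_
  filter_upwards [self_mem_nhdsWithin] with ε hε
  rw [← mul_max_of_nonneg _ _ (le_of_lt hε)]
  simp

theorem CornerTo.inf {L L' : ℝ → Zd d} {a : Fin d → ℝ} (h : CornerTo L a) (h' : CornerTo L' a) :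
    CornerTo (fun ε => L ε ⊓ L' ε) a := by
  intro i
  have := (h i).min (h' i)
  rw [min_self] at this
  refine this.congr' ?_
  filter_upwards [self_mem_nhdsWithin] with ε hε
  rw [← mul_min_of_nonneg _ _ (le_of_lt hε)]
  simp

/-- Volume of a box. -/
def bvol (a b : Fin d → ℝ) : ℝ := ∏ i, max (b i - a i) 0

theorem tendsto_card {L M : ℝ → Zd d} {a b : Fin d → ℝ} (hL : CornerTo L a) (hM : CornerTo M b) :
    Tendsto (fun ε : ℝ => ε ^ d * ((ibox (L ε) (M ε)).card : ℝ)) (𝓝[>] 0) (𝓝 (bvol a b)) := by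
  have h : Tendsto (fun ε : ℝ => ∏ i, max (ε * (M ε i : ℝ) - ε * (L ε i : ℝ)) 0) (𝓝[>] 0)
      (𝓝 (bvol a b)) :=
    tendsto_finsetProd _ fun i _ => ((hM i).sub (hL i)).max tendsto_const_nhds
  refine h.congr' ?_
  filter_upwards [self_mem_nhdsWithin] with ε hε
  rw [card_ibox]
  have : ε ^ d = ∏ _i : Fin d, ε := by simp
  rw [this, ← Finset.prod_mul_distrib]
  refine Finset.prod_congr rfl fun i _ => ?_
  rw [mul_max_of_nonneg _ _ (le_of_lt hε)]
  simp [mul_sub]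

/-- Sup-norm ball of radius `r` in the lattice. -/
def iball (x : Zd d) (r : ℕ) : Finset (Zd d) := ibox (fun i => x i - r) (fun i => x i + r + 1)

theorem mem_iball {x z : Zd d} {r : ℕ} :
    z ∈ iball x r ↔ ∀ i, x i - r ≤ z i ∧ z i < x i + r + 1 := mem_ibox

theorem card_iball (x : Zd d) (r : ℕ) : (iball x r).card = (2 * r + 1) ^ d := by
  have h : ((iball x r).card : ℝ) = (((2 * r + 1) ^ d : ℕ) : ℝ) := by
    unfold iball
    rw [card_ibox]
    push_cast
    rw [Finset.prod_congr rfl (g := fun _ => (2 * (r : ℝ) + 1))]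
    · simp
    · intro i _
      rw [max_eq_left] <;> ring_nf
      positivity
  exact_mod_cast h

/-- Vitali-type covering inequality. -/
theorem vitali_count (g : Zd d → ℝ≥0∞) (ρ : Zd d → ℕ) (lam : ℝ≥0∞) :
    ∀ (N : ℕ) (B U : Finset (Zd d)), B.card ≤ N →
      (∀ x ∈ B, iball x (ρ x) ⊆ U) →
      (∀ x ∈ B, lam * ((2 * ρ x + 1) ^ d : ℕ) ≤ ∑ z ∈ iball x (ρ x), g z) →
      lam * (B.card : ℝ≥0∞) ≤ 2 ^ d * ∑ z ∈ U, g z := by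
  intro N
  induction N with
  | zero =>
    intro B U hB _ _
    have : B.card = 0 := by omega
    simp [this]
  | succ N ih =>
    intro B U hB hU hg
    rcases B.eq_empty_or_nonempty with rfl | hne
    · simp
    obtain ⟨x, hx, hmax⟩ := B.exists_max_image ρ hne
    set B' := B.filter (fun y => Disjoint (iball y (ρ y)) (iball x (ρ x))) with hB'
    set B'' := B.filter (fun y => ¬ Disjoint (iball y (ρ y)) (iball x (ρ x))) with hB''
    have hcard : B'.card + B''.card = B.card := Finset.card_filter_add_card_filter_not _
    have hxx : x ∈ iball x (ρ x) := by
      rw [mem_iball]; intro i; omega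
    have hxB'' : x ∈ B'' := by
      rw [hB'', Finset.mem_filter]
      refine ⟨hx, fun h => ?_⟩
      exact (Finset.disjoint_left.mp h hxx) hxx
    have hpos : 0 < B''.card := Finset.card_pos.mpr ⟨x, hxB''⟩
    have h1 : lam * (B'.card : ℝ≥0∞) ≤ 2 ^ d * ∑ z ∈ U \ iball x (ρ x), g z := by
      apply ih
      · omega
      · intro y hy
        rw [hB', Finset.mem_filter] at hy
        exact Finset.subset_sdiff.mpr ⟨hU y hy.1, hy.2⟩
      · intro y hy
        exact hg y (Finset.mem_filter.mp hy).1
    have h2 : B''.card ≤ 2 ^ d * (2 * ρ x + 1) ^ d := by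
      have hs : B'' ⊆ iball x (2 * ρ x) := by
        intro y hy
        rw [hB'', Finset.mem_filter, Finset.not_disjoint_iff] at hy
        obtain ⟨hyB, z, hz1, hz2⟩ := hy
        have hle := hmax y hyB
        rw [mem_iball] at *
        intro i
        have := hz1 i
        have := hz2 i
        push_cast
        omega
      calc B''.card ≤ (iball x (2 * ρ x)).card := Finset.card_le_card hs
        _ = (2 * (2 * ρ x) + 1) ^ d := card_iball _ _
        _ ≤ (2 * (2 * ρ x + 1)) ^ d := Nat.pow_le_pow_left (by omega) _
        _ = _ := by rw [mul_pow]
    have h3 : lam * (B''.card : ℝ≥0∞) ≤ 2 ^ d * ∑ z ∈ iball x (ρ x), g z := by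
      calc lam * (B''.card : ℝ≥0∞) ≤ lam * ((2 ^ d * (2 * ρ x + 1) ^ d : ℕ) : ℝ≥0∞) := by
            gcongr
        _ = 2 ^ d * (lam * ((2 * ρ x + 1) ^ d : ℕ)) := by push_cast; ring
        _ ≤ _ := by gcongr; exact hg x hx
    calc lam * (B.card : ℝ≥0∞) = lam * B'.card + lam * B''.card := by
          rw [← hcard]; push_cast; ring
      _ ≤ 2 ^ d * ∑ z ∈ U \ iball x (ρ x), g z + 2 ^ d * ∑ z ∈ iball x (ρ x), g z :=
          add_le_add h1 h3
      _ = 2 ^ d * ∑ z ∈ U, g z := by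
          rw [← mul_add, Finset.sum_sdiff (hU x hx)]

/-- The truncated bad set of the maximal function. -/
def badN (τ : Zd d → Ω → Ω) (f : Ω → ℝ≥0∞) (lam : ℝ≥0∞) (N : ℕ) : Set Ω :=
  {ω | ∃ r : ℕ, r ≤ N ∧ lam * ((2 * r + 1) ^ d : ℕ) < ∑ z ∈ iball 0 r, f (τ z ω)}

/-- The bad set of the maximal function. -/
def badS (τ : Zd d → Ω → Ω) (f : Ω → ℝ≥0∞) (lam : ℝ≥0∞) : Set Ω :=
  {ω | ∃ r : ℕ, lam * ((2 * r + 1) ^ d : ℕ) < ∑ z ∈ iball 0 r, f (τ z ω)}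

theorem iball_shift (x : Zd d) (r : ℕ) (f : Zd d → ℝ≥0∞) :
    ∑ z ∈ iball 0 r, f (z + x) = ∑ z ∈ iball x r, f z := by
  unfold iball
  rw [sum_ibox_shift]
  congr 1
  congr 1 <;> ext i <;> simp <;> ring

theorem meas_badN (τ : Zd d → Ω → Ω) (hτ : ∀ z, Measurable (τ z)) (f : Ω → ℝ≥0∞)
    (hf : Measurable f) (lam : ℝ≥0∞) (N : ℕ) : MeasurableSet (badN τ f lam N) := by
  have : badN τ f lam N = ⋃ r : ℕ, ⋃ _ : r ≤ N,
      {ω | lam * ((2 * r + 1) ^ d : ℕ) < ∑ z ∈ iball 0 r, f (τ z ω)} := by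
    ext ω; simp [badN]
  rw [this]
  refine MeasurableSet.iUnion fun r => MeasurableSet.iUnion fun _ => ?_
  exact measurableSet_lt measurable_const
    (Finset.measurable_sum _ fun z _ => hf.comp (hτ z))

theorem maximal_N (P : Measure Ω) (τ : Zd d → Ω → Ω)
    (hτadd : ∀ x y : Zd d, τ (x + y) = τ x ∘ τ y)
    (hτmp : ∀ z : Zd d, MeasurePreserving (τ z) P P) (f : Ω → ℝ≥0∞)
    (hf : Measurable f) (lam : ℝ≥0∞) (N : ℕ) :
    lam * P (badN τ f lam N) ≤ 4 ^ d * ∫⁻ ω, f ω ∂P := by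
  set E := badN τ f lam N with hE
  have hEm : MeasurableSet E := meas_badN τ (fun z => (hτmp z).measurable) f hf lam N
  -- pointwise
  have hpt : ∀ ω, lam * ∑ x ∈ iball (0 : Zd d) N, E.indicator (fun _ => (1 : ℝ≥0∞)) (τ x ω) ≤
      2 ^ d * ∑ z ∈ iball (0 : Zd d) (2 * N), f (τ z ω) := by
    intro ω
    have hr : ∀ x : Zd d, ∃ r : ℕ, τ x ω ∈ E → r ≤ N ∧
        lam * ((2 * r + 1) ^ d : ℕ) < ∑ z ∈ iball x r, f (τ z ω) := by
      intro x
      by_cases hx : τ x ω ∈ E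
      · obtain ⟨r, hr1, hr2⟩ := hx
        refine ⟨r, fun _ => ⟨hr1, ?_⟩⟩
        rw [← iball_shift x r (fun z => f (τ z ω))]
        simpa only [hτadd, Function.comp_apply] using hr2
      · exact ⟨0, fun h => absurd h hx⟩
    choose ρ hρ using hr
    have := vitali_count (fun z => f (τ z ω)) ρ lam _
      ((iball (0 : Zd d) N).filter (fun x => τ x ω ∈ E)) (iball (0 : Zd d) (2 * N)) le_rfl
      (by
        intro x hx y hy
        rw [Finset.mem_filter, mem_iball] at hx
        rw [mem_iball] at *
        have hle := (hρ x hx.2).1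
        intro i
        have := hx.1 i
        have := hy i
        simp only [Pi.zero_apply] at *
        push_cast
        omega)
      (by
        intro x hx
        rw [Finset.mem_filter] at hx
        exact (hρ x hx.2).2.le)
    refine le_trans (le_of_eq ?_) this
    congr 1
    rw [Finset.card_filter]
    push_cast
    refine Finset.sum_congr rfl fun x _ => ?_
    simp [indicator]
  have hgInt : ∀ (g : Ω → ℝ≥0∞), Measurable g → ∀ r : ℕ,
      ∫⁻ ω, ∑ z ∈ iball (0 : Zd d) r, g (τ z ω) ∂P = ((2 * r + 1) ^ d : ℕ) * ∫⁻ ω, g ω ∂P := by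
    intro g hg r
    have hgm : ∀ z, Measurable fun ω => g (τ z ω) := fun z => hg.comp (hτmp z).measurable
    rw [lintegral_finsetSum _ fun z _ => hgm z]
    rw [Finset.sum_congr rfl (g := fun _ => ∫⁻ ω, g ω ∂P)
      fun z _ => (hτmp z).lintegral_comp hg]
    rw [Finset.sum_const, card_iball, nsmul_eq_mul]
  have hI := lintegral_mono (μ := P) hpt
  have hind : Measurable (E.indicator (fun _ => (1 : ℝ≥0∞))) :=
    measurable_const.indicator hEm
  have hgm : ∀ (g : Ω → ℝ≥0∞), Measurable g → ∀ r : ℕ,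
      Measurable fun ω => ∑ z ∈ iball (0 : Zd d) r, g (τ z ω) := fun g hg r =>
    Finset.measurable_sum _ fun z _ => hg.comp (hτmp z).measurable
  rw [lintegral_const_mul _ (hgm _ hind N), lintegral_const_mul _ (hgm _ hf (2 * N)),
    hgInt _ hind, hgInt _ hf, lintegral_indicator_const hEm, one_mul] at hI
  have hpow : ((2 * (2 * N) + 1) ^ d : ℕ) ≤ 2 ^ d * (2 * N + 1) ^ d := by
    rw [← mul_pow]; exact Nat.pow_le_pow_left (by omega) _
  have hI2 : ((2 * N + 1) ^ d : ℕ) * (lam * P E) ≤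
      ((2 * N + 1) ^ d : ℕ) * (4 ^ d * ∫⁻ ω, f ω ∂P) := by
    calc _ = lam * (((2 * N + 1) ^ d : ℕ) * P E) := by ring
      _ ≤ _ := hI
      _ ≤ 2 ^ d * (((2 ^ d * (2 * N + 1) ^ d : ℕ) : ℝ≥0∞) * ∫⁻ ω, f ω ∂P) := by gcongr
      _ = _ := by
        have : (4 : ℝ≥0∞) ^ d = 2 ^ d * 2 ^ d := by rw [← mul_pow]; norm_num
        rw [this]; push_cast; ring
  refine (ENNReal.mul_le_mul_iff_right ?_ ?_).mp hI2
  · exact_mod_cast (by positivity : (2 * N + 1) ^ d ≠ 0)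
  · exact ENNReal.natCast_ne_top _

theorem maximal_ineq (P : Measure Ω) (τ : Zd d → Ω → Ω)
    (hτadd : ∀ x y : Zd d, τ (x + y) = τ x ∘ τ y)
    (hτmp : ∀ z : Zd d, MeasurePreserving (τ z) P P) (f : Ω → ℝ≥0∞)
    (hf : Measurable f) (lam : ℝ≥0∞) :
    lam * P (badS τ f lam) ≤ 4 ^ d * ∫⁻ ω, f ω ∂P := by
  have hU : badS τ f lam = ⋃ N, badN τ f lam N := by
    ext ω
    simp only [badS, badN, mem_ofPred_eq, mem_iUnion]
    constructor
    · rintro ⟨r, hr⟩; exact ⟨r, r, le_rfl, hr⟩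
    · rintro ⟨_, r, _, hr⟩; exact ⟨r, hr⟩
  have hmono : Monotone (badN τ f lam) := by
    intro N N' h ω ⟨r, hr, h'⟩
    exact ⟨r, hr.trans h, h'⟩
  rw [hU, hmono.measure_iUnion, ENNReal.mul_iSup]
  exact iSup_le fun N => maximal_N P τ hτadd hτmp f hf lam N

/-- The ergodic limit holds at `ω` for all boxes. -/
def ErgAt (P : Measure Ω) (τ : Zd d → Ω → Ω) (G : Ω → ℝ) (ω : Ω) : Prop :=
  ∀ (a b : Fin d → ℝ) (L M : ℝ → Zd d), CornerTo L a → CornerTo M b →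
    Tendsto (fun ε : ℝ => ε ^ d * ∑ z ∈ ibox (L ε) (M ε), G (τ z ω)) (𝓝[>] 0)
      (𝓝 (bvol a b * ∫ x, G x ∂P))

/-- Functions with everywhere ergodic limit. -/
def GoodG (P : Measure Ω) (τ : Zd d → Ω → Ω) (G : Ω → ℝ) : Prop :=
  Measurable G ∧ Integrable G P ∧ ∀ ω, ErgAt P τ G ω

theorem GoodG.add {P : Measure Ω} {τ : Zd d → Ω → Ω} {G H : Ω → ℝ}
    (hG : GoodG P τ G) (hH : GoodG P τ H) : GoodG P τ (fun ω => G ω + H ω) := by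
  refine ⟨hG.1.add hH.1, hG.2.1.add hH.2.1, fun ω a b L M hL hM => ?_⟩
  rw [integral_add hG.2.1 hH.2.1, mul_add]
  refine ((hG.2.2 ω a b L M hL hM).add (hH.2.2 ω a b L M hL hM)).congr fun ε => ?_
  rw [Finset.sum_add_distrib, mul_add]

theorem GoodG.smul {P : Measure Ω} {τ : Zd d → Ω → Ω} {G : Ω → ℝ}
    (hG : GoodG P τ G) (c : ℝ) : GoodG P τ (fun ω => c * G ω) := by
  refine ⟨hG.1.const_mul c, hG.2.1.const_mul c, fun ω a b L M hL hM => ?_⟩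
  rw [integral_const_mul, mul_left_comm]
  refine ((hG.2.2 ω a b L M hL hM).const_mul c).congr fun ε => ?_
  rw [← Finset.mul_sum, mul_left_comm]

theorem goodG_const (P : Measure Ω) [IsProbabilityMeasure P] (τ : Zd d → Ω → Ω) (c : ℝ) :
    GoodG P τ (fun _ => c) := by
  refine ⟨measurable_const, integrable_const c, fun ω a b L M hL hM => ?_⟩
  simp only [integral_const, probReal_univ, one_smul]
  refine ((tendsto_card hL hM).mul_const c).congr fun ε => ?_
  simp [mul_assoc]

theorem goodG_cob (P : Measure Ω) [IsProbabilityMeasure P] (τ : Zd d → Ω → Ω)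
    (hτadd : ∀ x y : Zd d, τ (x + y) = τ x ∘ τ y)
    (hτmp : ∀ z : Zd d, MeasurePreserving (τ z) P P)
    (g : Ω → ℝ) (hg : Measurable g) (hb : ∀ ω, |g ω| ≤ 1) (w : Zd d) :
    GoodG P τ (fun ω => g ω - g (τ w ω)) := by
  have hgi : Integrable g P := Integrable.of_bound hg.aestronglyMeasurable 1
    (Eventually.of_forall fun ω => by simpa using hb ω)
  have hgi' : Integrable (fun ω => g (τ w ω)) P := (hτmp w).integrable_comp_of_integrable hgi
  refine ⟨hg.sub (hg.comp (hτmp w).measurable), hgi.sub hgi', fun ω a b L M hL hM => ?_⟩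
  have hgInt : ∫ ω', (g ω' - g (τ w ω')) ∂P = 0 := by
    rw [integral_sub hgi hgi', sub_eq_zero]
    have h := integral_map (μ := P) (φ := τ w) (hτmp w).measurable.aemeasurable
      (f := g) hg.aestronglyMeasurable
    rw [(hτmp w).map_eq] at h
    exact h
  rw [hgInt, mul_zero]
  have hL' := hL.add w
  have hM' := hM.add w
  have h1 := tendsto_card hL hM
  have h2 := tendsto_card hL' hM'
  have h3 := tendsto_card (hL.sup hL') (hM.inf hM')
  have h4 := (h1.add h2).sub (h3.const_mul 2)
  have h0 : bvol a b + bvol a b - 2 * bvol a b = 0 := by ring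
  rw [h0] at h4
  refine squeeze_zero_norm' ?_ h4
  filter_upwards [self_mem_nhdsWithin] with ε hε
  have hε' : (0 : ℝ) ≤ ε ^ d := pow_nonneg (le_of_lt hε) d
  set B := ibox (L ε) (M ε) with hB
  set B' := ibox (L ε + w) (M ε + w) with hB'
  have hBB : ibox (L ε ⊔ (L ε + w)) (M ε ⊓ (M ε + w)) = B ∩ B' := by
    ext z
    simp only [Finset.mem_inter, hB, hB', mem_ibox, Pi.sup_apply, Pi.inf_apply, sup_le_iff,
      lt_inf_iff]
    constructor
    · intro h; exact ⟨fun i => ⟨(h i).1.1, (h i).2.1⟩, fun i => ⟨(h i).1.2, (h i).2.2⟩⟩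
    · intro h i; exact ⟨⟨(h.1 i).1, (h.2 i).1⟩, ⟨(h.1 i).2, (h.2 i).2⟩⟩
  rw [hBB]
  have hsum : ∑ z ∈ B, (g (τ z ω) - g (τ w (τ z ω))) =
      ∑ z ∈ B \ B', g (τ z ω) - ∑ z ∈ B' \ B, g (τ z ω) := by
    rw [Finset.sum_sub_distrib]
    have h5 : ∑ z ∈ B, g (τ w (τ z ω)) = ∑ z ∈ B', g (τ z ω) := by
      rw [hB', ← sum_ibox_shift (L ε) (M ε) w (fun z => g (τ z ω))]
      refine Finset.sum_congr rfl fun z _ => ?_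
      rw [add_comm, hτadd]; rfl
    rw [h5]
    have e1 := Finset.sum_inter_add_sum_sdiff B B' (fun z => g (τ z ω))
    have e2 := Finset.sum_inter_add_sum_sdiff B' B (fun z => g (τ z ω))
    rw [Finset.inter_comm] at e2
    linarith
  have hbd : ∀ S : Finset (Zd d), |∑ z ∈ S, g (τ z ω)| ≤ S.card := by
    intro S
    calc |∑ z ∈ S, g (τ z ω)| ≤ ∑ z ∈ S, |g (τ z ω)| := Finset.abs_sum_le_sum_abs _ _
      _ ≤ ∑ z ∈ S, (1 : ℝ) := Finset.sum_le_sum fun z _ => hb _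
      _ = S.card := by simp
  rw [hsum, Real.norm_eq_abs, abs_mul, abs_of_nonneg hε']
  have c1 : ((B \ B').card : ℝ) + (B ∩ B').card = B.card := by
    exact_mod_cast Finset.card_sdiff_add_card_inter B B'
  have c2 : ((B' \ B).card : ℝ) + (B ∩ B').card = B'.card := by
    rw [Finset.inter_comm]; exact_mod_cast Finset.card_sdiff_add_card_inter B' B
  have := hbd (B \ B')
  have := hbd (B' \ B)
  calc ε ^ d * |∑ z ∈ B \ B', g (τ z ω) - ∑ z ∈ B' \ B, g (τ z ω)|
      ≤ ε ^ d * (B.card + B'.card - 2 * (B ∩ B').card) := by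
        gcongr
        refine (abs_sub _ _).trans ?_
        linarith
    _ = _ := by ring

theorem invariant_zero (P : Measure Ω) [IsProbabilityMeasure P] (τ : Zd d → Ω → Ω)
    (hτ0 : τ 0 = id)
    (hτadd : ∀ x y : Zd d, τ (x + y) = τ x ∘ τ y)
    (hτmp : ∀ z : Zd d, MeasurePreserving (τ z) P P)
    (hτerg : ∀ B : Set Ω, MeasurableSet B → (∀ z : Zd d, τ z ⁻¹' B = B) → P B = 0 ∨ P B = 1)
    (x : Ω → ℝ) (hx : Measurable x) (hxi : Integrable x P) (h0 : ∫ ω, x ω ∂P = 0)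
    (hinv : ∀ z, ∀ᵐ ω ∂P, x (τ z ω) = x ω) : x =ᵐ[P] 0 := by
  set B : Set Ω := {ω | ∀ z, 0 < x (τ z ω)} with hB
  have hBm : MeasurableSet B := by
    have : B = ⋂ z, {ω | 0 < x (τ z ω)} := by ext ω; simp [hB]
    rw [this]
    exact MeasurableSet.iInter fun z =>
      measurableSet_lt measurable_const (hx.comp (hτmp z).measurable)
  have hBi : ∀ z : Zd d, τ z ⁻¹' B = B := by
    intro z
    ext ω
    simp only [hB, mem_preimage, mem_ofPred_eq]
    constructor
    · intro h y
      have := h (y - z)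
      rwa [← Function.comp_apply (f := τ (y - z)), ← hτadd, sub_add_cancel] at this
    · intro h y
      rw [← Function.comp_apply (f := τ y), ← hτadd]
      exact h _
  have hall : ∀ᵐ ω ∂P, ∀ z, x (τ z ω) = x ω := ae_all_iff.mpr hinv
  rcases hτerg B hBm hBi with h | h
  · have hn : ∀ᵐ ω ∂P, ω ∉ B := measure_eq_zero_iff_ae_notMem.mp h
    have hle : ∀ᵐ ω ∂P, 0 ≤ -x ω := by
      filter_upwards [hall, hn] with ω h1 h2
      by_contra hc
      apply h2
      intro z
      rw [h1 z]; linarith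
    have := (integral_eq_zero_iff_of_nonneg_ae hle hxi.neg).mp
      (by simp only [Pi.neg_apply, integral_neg, h0, neg_zero])
    filter_upwards [this] with ω hω
    simpa using hω
  · have hn : ∀ᵐ ω ∂P, ω ∈ B := (prob_compl_eq_zero_iff hBm).mpr h
    have hle : ∀ᵐ ω ∂P, 0 ≤ x ω := by
      filter_upwards [hall, hn] with ω h1 h2
      have := h2 0
      rw [h1 0] at this
      exact this.le
    exact (integral_eq_zero_iff_of_nonneg_ae hle hxi).mp h0

/-- The subspace of `L²` of classes of good functions. -/
def goodSub (P : Measure Ω) [IsProbabilityMeasure P] (τ : Zd d → Ω → Ω) :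
    Submodule ℝ (Lp ℝ 2 P) where
  carrier := {x | ∃ G : Ω → ℝ, GoodG P τ G ∧ (x : Ω → ℝ) =ᵐ[P] G}
  zero_mem' := ⟨fun _ => 0, goodG_const P τ 0, Lp.coeFn_zero _ _ _⟩
  add_mem' := by
    rintro x y ⟨G, hG, hxG⟩ ⟨H, hH, hyH⟩
    refine ⟨_, hG.add hH, ?_⟩
    filter_upwards [Lp.coeFn_add x y, hxG, hyH] with ω h1 h2 h3
    rw [h1, Pi.add_apply, h2, h3]
  smul_mem' := by
    rintro c x ⟨G, hG, hxG⟩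
    refine ⟨_, hG.smul c, ?_⟩
    filter_upwards [Lp.coeFn_smul c x, hxG] with ω h1 h2
    rw [h1, Pi.smul_apply, h2, smul_eq_mul]

theorem goodSub_dense (P : Measure Ω) [IsProbabilityMeasure P] (τ : Zd d → Ω → Ω)
    (hτ0 : τ 0 = id)
    (hτadd : ∀ x y : Zd d, τ (x + y) = τ x ∘ τ y)
    (hτmp : ∀ z : Zd d, MeasurePreserving (τ z) P P)
    (hτerg : ∀ B : Set Ω, MeasurableSet B → (∀ z : Zd d, τ z ⁻¹' B = B) → P B = 0 ∨ P B = 1) :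
    (goodSub P τ).topologicalClosure = ⊤ := by
  rw [Submodule.topologicalClosure_eq_top_iff, Submodule.eq_bot_iff]
  intro x hx
  rw [Submodule.mem_orthogonal'] at hx
  set x0 : Ω → ℝ := (Lp.aestronglyMeasurable x).mk x with hx0
  have hxx0 : (x : Ω → ℝ) =ᵐ[P] x0 := (Lp.aestronglyMeasurable x).ae_eq_mk
  have hx0m : Measurable x0 := (Lp.aestronglyMeasurable x).stronglyMeasurable_mk.measurable
  have hxi : Integrable (x : Ω → ℝ) P := (Lp.memLp x).integrable (by norm_num)
  have hx0i : Integrable x0 P := hxi.congr hxx0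
  have key : ∀ G : Ω → ℝ, GoodG P τ G → (∃ C, ∀ ω, |G ω| ≤ C) → ∫ ω, x0 ω * G ω ∂P = 0 := by
    rintro G hG ⟨C, hC⟩
    have hm : MemLp G 2 P := MemLp.of_bound hG.1.aestronglyMeasurable C
      (Eventually.of_forall fun ω => by simpa using hC ω)
    have := hx (hm.toLp G) ⟨G, hG, hm.coeFn_toLp⟩
    rw [L2.inner_def] at this
    rw [← this]
    refine integral_congr_ae ?_
    filter_upwards [hm.coeFn_toLp, hxx0] with ω h1 h2
    rw [h1, h2]; simp [mul_comm]
  have h0 : ∫ ω, x0 ω ∂P = 0 := by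
    have := key (fun _ => 1) (goodG_const P τ 1) ⟨1, fun _ => by simp⟩
    simpa using this
  have hinv : ∀ z, ∀ᵐ ω ∂P, x0 (τ z ω) = x0 ω := by
    intro z
    have hz : Integrable (fun ω => x0 (τ z ω)) P := (hτmp z).integrable_comp_of_integrable hx0i
    refine hz.ae_eq_of_forall_setIntegral_eq _ _ hx0i fun s hs _ => ?_
    set g : Ω → ℝ := s.indicator (fun _ => 1) with hg
    have hgm : Measurable g := measurable_const.indicator hs
    have hgb : ∀ ω, |g ω| ≤ 1 := by
      intro ω; by_cases h : ω ∈ s <;> simp [hg, h]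
    have hk := key _ (goodG_cob P τ hτadd hτmp g hgm hgb (-z))
      ⟨2, fun ω => (abs_sub _ _).trans (by linarith [hgb ω, hgb (τ (-z) ω)])⟩
    have i1 : Integrable (fun ω => x0 ω * g ω) P :=
      hx0i.mul_bdd (c := 1) hgm.aestronglyMeasurable (Eventually.of_forall fun ω => by simpa using hgb ω)
    have i2 : Integrable (fun ω => x0 ω * g (τ (-z) ω)) P :=
      hx0i.mul_bdd (c := 1) (hgm.comp (hτmp (-z)).measurable).aestronglyMeasurable
        (Eventually.of_forall fun ω => by simpa using hgb _)
    simp only [mul_sub] at hk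
    rw [integral_sub i1 i2, sub_eq_zero] at hk
    have e1 : ∫ ω, x0 ω * g ω ∂P = ∫ ω in s, x0 ω ∂P := by
      rw [← integral_indicator hs]
      congr 1; ext ω; by_cases h : ω ∈ s <;> simp [hg, h]
    have e2 : ∫ ω, x0 ω * g (τ (-z) ω) ∂P = ∫ ω in s, x0 (τ z ω) ∂P := by
      have hh := integral_map (μ := P) (φ := τ z) (hτmp z).measurable.aemeasurable
        (f := fun ω => x0 ω * g (τ (-z) ω))
        (hx0m.mul (hgm.comp (hτmp (-z)).measurable)).aestronglyMeasurable
      rw [(hτmp z).map_eq] at hh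
      rw [hh, ← integral_indicator hs]
      congr 1; ext ω
      have : τ (-z) (τ z ω) = ω := by
        rw [← Function.comp_apply (f := τ (-z)), ← hτadd, neg_add_cancel, hτ0]; rfl
      rw [this]
      by_cases h : ω ∈ s <;> simp [hg, h]
    rw [← e1, ← e2, hk]
  have hz := invariant_zero P τ hτ0 hτadd hτmp hτerg x0 hx0m hx0i h0 hinv
  rw [Lp.eq_zero_iff_ae_eq_zero]
  exact hxx0.trans hz

theorem approx_good (P : Measure Ω) [IsProbabilityMeasure P] (τ : Zd d → Ω → Ω)
    (hτ0 : τ 0 = id)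
    (hτadd : ∀ x y : Zd d, τ (x + y) = τ x ∘ τ y)
    (hτmp : ∀ z : Zd d, MeasurePreserving (τ z) P P)
    (hτerg : ∀ B : Set Ω, MeasurableSet B → (∀ z : Zd d, τ z ⁻¹' B = B) → P B = 0 ∨ P B = 1)
    (f : Ω → ℝ) (hfi : Integrable f P) (η : ℝ≥0∞) (hη : η ≠ 0) :
    ∃ G, GoodG P τ G ∧ ∫⁻ ω, ‖f ω - G ω‖ₑ ∂P ≤ η := by
  have hη2 : η / 2 ≠ 0 := by simp [hη]
  obtain ⟨s, hs, hs'⟩ := (memLp_one_iff_integrable.mpr hfi).exists_simpleFunc_eLpNorm_sub_lt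
    ENNReal.one_ne_top hη2
  have hsm : MemLp s 2 P := SimpleFunc.memLp_of_isFiniteMeasure s 2 P
  have hcl : hsm.toLp s ∈ closure ((goodSub P τ : Set (Lp ℝ 2 P))) := by
    have : hsm.toLp s ∈ (goodSub P τ).topologicalClosure := by
      rw [goodSub_dense P τ hτ0 hτadd hτmp hτerg]; trivial
    exact this
  obtain ⟨y, ⟨G, hG, hyG⟩, hy⟩ := EMetric.mem_closure_iff.mp hcl (η / 2) (pos_iff_ne_zero.mpr hη2)
  refine ⟨G, hG, ?_⟩
  have h2 : eLpNorm ((s : Ω → ℝ) - G) 1 P ≤ η / 2 := by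
    have hle : eLpNorm ((s : Ω → ℝ) - G) 1 P ≤ eLpNorm ((s : Ω → ℝ) - G) 2 P :=
      eLpNorm_le_eLpNorm_of_exponent_le (by norm_num)
        (s.measurable.sub hG.1).aestronglyMeasurable
    rw [Lp.edist_def] at hy
    refine hle.trans (le_of_eq_of_le ?_ hy.le)
    refine eLpNorm_congr_ae ?_
    filter_upwards [hsm.coeFn_toLp, hyG] with ω h1 h2
    simp [h1, h2]
  have h3 : eLpNorm (f - (s : Ω → ℝ)) 1 P + eLpNorm ((s : Ω → ℝ) - G) 1 P ≤ η :=
    (add_le_add hs.le h2).trans (ENNReal.add_halves η).le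
  have h4 : eLpNorm ((f - (s : Ω → ℝ)) + ((s : Ω → ℝ) - G)) 1 P ≤ η :=
    (eLpNorm_add_le (hfi.aestronglyMeasurable.sub s.aestronglyMeasurable)
      (s.aestronglyMeasurable.sub hG.1.aestronglyMeasurable) le_rfl).trans h3
  rw [sub_add_sub_cancel, eLpNorm_one_eq_lintegral_enorm] at h4
  exact h4

theorem ergodic_thm (P : Measure Ω) [IsProbabilityMeasure P] (τ : Zd d → Ω → Ω)
    (hτ0 : τ 0 = id)
    (hτadd : ∀ x y : Zd d, τ (x + y) = τ x ∘ τ y)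
    (hτmp : ∀ z : Zd d, MeasurePreserving (τ z) P P)
    (hτerg : ∀ B : Set Ω, MeasurableSet B → (∀ z : Zd d, τ z ⁻¹' B = B) → P B = 0 ∨ P B = 1)
    (f : Ω → ℝ) (hfm : Measurable f) (hfi : Integrable f P) :
    ∀ᵐ ω ∂P, ErgAt P τ f ω := by
  have hex : ∀ m : ℕ, ∃ G, GoodG P τ G ∧ ∫⁻ ω, ‖f ω - G ω‖ₑ ∂P ≤ ((2 : ℝ≥0∞)⁻¹ ^ m) * (2⁻¹ ^ m) :=
    fun m => approx_good P τ hτ0 hτadd hτmp hτerg f hfi _ (by simp)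
  choose G hG hGf using hex
  have hbad : ∀ m, P (badS τ (fun ω => ‖f ω - G m ω‖ₑ) (2⁻¹ ^ m)) ≤ 4 ^ d * 2⁻¹ ^ m := by
    intro m
    have h1 := maximal_ineq P τ hτadd hτmp (fun ω => ‖f ω - G m ω‖ₑ)
      (hfm.sub (hG m).1).enorm (2⁻¹ ^ m)
    have h2 : (2⁻¹ : ℝ≥0∞) ^ m * P (badS τ (fun ω => ‖f ω - G m ω‖ₑ) (2⁻¹ ^ m)) ≤
        2⁻¹ ^ m * (4 ^ d * 2⁻¹ ^ m) := by
      refine h1.trans ?_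
      calc 4 ^ d * ∫⁻ ω, ‖f ω - G m ω‖ₑ ∂P ≤ 4 ^ d * (((2 : ℝ≥0∞)⁻¹ ^ m) * (2⁻¹ ^ m)) := by
            gcongr; exact hGf m
        _ = _ := by ring
    refine (ENNReal.mul_le_mul_iff_right ?_ ?_).mp h2
    · simp
    · exact ENNReal.pow_ne_top (by simp)
  have hsum : ∑' m, P (badS τ (fun ω => ‖f ω - G m ω‖ₑ) (2⁻¹ ^ m)) ≠ ∞ := by
    refine ne_top_of_le_ne_top ?_ (ENNReal.tsum_le_tsum hbad)
    rw [ENNReal.tsum_mul_left, ENNReal.tsum_geometric]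
    refine ENNReal.mul_ne_top (ENNReal.pow_ne_top (by simp)) ?_
    rw [ENNReal.one_sub_inv_two]; simp
  filter_upwards [ae_eventually_notMem hsum] with ω hω
  intro a b L M hL hM
  -- the uniform scale
  obtain ⟨C, hC0, hC⟩ : ∃ C : ℝ, 0 ≤ C ∧ ∀ᶠ ε in 𝓝[>] (0 : ℝ), ∀ i,
      |ε * (L ε i : ℝ)| ≤ C ∧ |ε * (M ε i : ℝ)| ≤ C := by
    refine ⟨∑ i, (|a i| + |b i|) + 1, by positivity, ?_⟩
    rw [eventually_all]
    intro i
    have hle : |a i| + |b i| ≤ ∑ i, (|a i| + |b i|) :=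
      Finset.single_le_sum (f := fun i => |a i| + |b i|) (fun j _ => by positivity)
        (Finset.mem_univ i)
    have ha : |a i| < ∑ i, (|a i| + |b i|) + 1 := by linarith [abs_nonneg (b i)]
    have hb : |b i| < ∑ i, (|a i| + |b i|) + 1 := by linarith [abs_nonneg (a i)]
    filter_upwards [(hL i).abs.eventually (gt_mem_nhds ha),
      (hM i).abs.eventually (gt_mem_nhds hb)] with ε h1 h2
    exact ⟨h1.le, h2.le⟩
  set D : ℝ := 2 * C + 3 with hD
  have hD0 : 0 < D := by positivity
  -- approximation error
  have herr : ∀ m, ω ∉ badS τ (fun ω => ‖f ω - G m ω‖ₑ) (2⁻¹ ^ m) →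
      ∀ᶠ ε in 𝓝[>] (0 : ℝ), |ε ^ d * ∑ z ∈ ibox (L ε) (M ε), f (τ z ω) -
        ε ^ d * ∑ z ∈ ibox (L ε) (M ε), G m (τ z ω)| ≤ 2⁻¹ ^ m * D ^ d := by
    intro m hm
    filter_upwards [hC, self_mem_nhdsWithin, Ioo_mem_nhdsGT (zero_lt_one' ℝ)] with ε hε hε0 hε1
    have hε0 : 0 < ε := hε0
    set r : ℕ := ⌈C / ε⌉₊ with hr
    have hCr : C / ε ≤ r := Nat.le_ceil _
    have hrC : (r : ℝ) < C / ε + 1 := Nat.ceil_lt_add_one (by positivity)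
    have hsub : ibox (L ε) (M ε) ⊆ iball 0 r := by
      intro z hz
      rw [mem_ibox] at hz
      rw [mem_iball]
      intro i
      obtain ⟨h1, h2⟩ := hε i
      rw [abs_mul, abs_of_pos hε0, ← le_div_iff₀' hε0] at h1 h2
      have h3 := abs_le.mp (h1.trans hCr)
      have h4 := abs_le.mp (h2.trans hCr)
      have h5 : -(r : ℤ) ≤ L ε i := by exact_mod_cast h3.1
      have h6 : M ε i ≤ (r : ℤ) := by exact_mod_cast h4.2
      have := hz i
      simp only [Pi.zero_apply]
      omega
    simp only [badS, mem_ofPred_eq, not_exists, not_lt] at hm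
    have hmr := hm r
    have hmr' : ∑ z ∈ iball (0 : Zd d) r, ‖f (τ z ω) - G m (τ z ω)‖ ≤
        2⁻¹ ^ m * (2 * (r : ℝ) + 1) ^ d := by
      have := ENNReal.toReal_mono (ENNReal.mul_ne_top (ENNReal.pow_ne_top (by simp))
        (ENNReal.natCast_ne_top _)) hmr
      rw [ENNReal.toReal_sum (by simp), ENNReal.toReal_mul, ENNReal.toReal_natCast] at this
      simpa using this
    rw [← mul_sub, ← Finset.sum_sub_distrib, abs_mul, abs_of_pos (pow_pos hε0 d)]
    calc ε ^ d * |∑ z ∈ ibox (L ε) (M ε), (f (τ z ω) - G m (τ z ω))|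
        ≤ ε ^ d * ∑ z ∈ iball (0 : Zd d) r, ‖f (τ z ω) - G m (τ z ω)‖ := by
          gcongr
          refine (Finset.abs_sum_le_sum_abs _ _).trans ?_
          exact Finset.sum_le_sum_of_subset_of_nonneg hsub fun _ _ _ => abs_nonneg _
      _ ≤ ε ^ d * (2⁻¹ ^ m * (2 * (r : ℝ) + 1) ^ d) := by gcongr
      _ = 2⁻¹ ^ m * (ε * (2 * (r : ℝ) + 1)) ^ d := by rw [mul_pow]; ring
      _ ≤ 2⁻¹ ^ m * D ^ d := by
          gcongr
          have : ε * (C / ε) = C := by field_simp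
          have h7 : ε * (r : ℝ) ≤ ε * (C / ε + 1) := by gcongr
          rw [mul_add, this] at h7
          have := hε1.2
          rw [hD]; nlinarith
  have hintm : ∀ m, |∫ ω', f ω' ∂P - ∫ ω', G m ω' ∂P| ≤ 2⁻¹ ^ m := by
    intro m
    rw [← integral_sub hfi (hG m).2.1, ← Real.norm_eq_abs]
    refine (norm_integral_le_lintegral_norm _).trans ?_
    have h1 : ∫⁻ ω, ENNReal.ofReal ‖f ω - G m ω‖ ∂P ≤ (2 : ℝ≥0∞)⁻¹ ^ m := by
      simp only [ofReal_norm]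
      refine (hGf m).trans ?_
      calc (2 : ℝ≥0∞)⁻¹ ^ m * 2⁻¹ ^ m ≤ (2 : ℝ≥0∞)⁻¹ ^ m * 1 := by
            gcongr
            exact pow_le_one₀ (by simp) (by simp)
        _ = _ := mul_one _
    have := ENNReal.toReal_mono (ENNReal.pow_ne_top (by simp)) h1
    simpa using this
  have hbv : 0 ≤ bvol a b := Finset.prod_nonneg fun i _ => le_max_right _ _
  rw [Metric.tendsto_nhds]
  intro δ hδ
  set K : ℝ := D ^ d + bvol a b with hK
  have hK0 : 0 < K := by positivity
  have hlim : Tendsto (fun m : ℕ => (2⁻¹ : ℝ) ^ m * K) atTop (𝓝 0) := by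
    have := (tendsto_pow_atTop_nhds_zero_of_lt_one (r := (2⁻¹ : ℝ)) (by norm_num)
      (by norm_num)).mul_const K
    simpa using this
  obtain ⟨m, hm1, hm2⟩ := (hω.and (hlim.eventually (gt_mem_nhds (half_pos hδ)))).exists
  have hGt := (Metric.tendsto_nhds.mp ((hG m).2.2 ω a b L M hL hM)) (δ / 2) (half_pos hδ)
  filter_upwards [hGt, herr m hm1] with ε h1 h2
  rw [Real.dist_eq] at h1 ⊢
  have h3 : |bvol a b * ∫ ω', G m ω' ∂P - bvol a b * ∫ ω', f ω' ∂P| ≤ bvol a b * 2⁻¹ ^ m := by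
    rw [← mul_sub, abs_mul, abs_of_nonneg hbv, abs_sub_comm]
    gcongr; exact hintm m
  have e := abs_sub_le (ε ^ d * ∑ z ∈ ibox (L ε) (M ε), f (τ z ω))
    (ε ^ d * ∑ z ∈ ibox (L ε) (M ε), G m (τ z ω)) (bvol a b * ∫ ω', f ω' ∂P)
  have e2 := abs_sub_le (ε ^ d * ∑ z ∈ ibox (L ε) (M ε), G m (τ z ω))
    (bvol a b * ∫ ω', G m ω' ∂P) (bvol a b * ∫ ω', f ω' ∂P)
  rw [hK, mul_add] at hm2
  linarith

/-- Local energy density at a site, as a function of the increments of the corrector. -/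
def locE (E0 : Finset (Zd d)) (V : Zd d → Ω → Rn n → ℝ) (F : Rd d →L[ℝ] Rn n) (ω : Ω)
    (D : Zd d → Rn n) : ℝ :=
  ∑ b ∈ E0, V b ω ((‖toRd b‖)⁻¹ • (F (toRd b) + D b))

/-- Cell energy of a corrector. -/
def cellEn (τ : Zd d → Ω → Ω) (E0 : Finset (Zd d)) (V : Zd d → Ω → Rn n → ℝ)
    (F : Rd d →L[ℝ] Rn n) (k : ℕ) (φ : Zd d → Rn n) (ω : Ω) : ℝ :=
  ∑ z ∈ ibox (0 : Zd d) (fun _ => (k : ℤ)), locE E0 V F (τ z ω) (fun b => φ (z + b) - φ z)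

/-- Admissible correctors. -/
def Adm (E0 : Finset (Zd d)) (A : Set (Rd d)) (φ : Zd d → Rn n) : Prop :=
  ∀ z : Zd d, infDist (toRd z) Aᶜ ≤ irange d E0 → φ z = 0

theorem toRd_apply (z : Zd d) (i : Fin d) : toRd z i = (z i : ℝ) := rfl

theorem toRd_add (z w : Zd d) : toRd (z + w) = toRd z + toRd w := by
  ext i; simp [toRd_apply]

theorem toRd_sub (z w : Zd d) : toRd (z - w) = toRd z - toRd w := by
  ext i; simp [toRd_apply]

theorem mem_cube_iff (k : ℕ) (z : Zd d) :
    toRd z ∈ cube d k ↔ z ∈ ibox (0 : Zd d) (fun _ => (k : ℤ)) := by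
  rw [mem_ibox]
  simp only [cube, mem_ofPred_eq, toRd_apply, Pi.zero_apply]
  refine forall_congr' fun i => and_congr ?_ ?_
  · exact_mod_cast Iff.rfl
  · exact_mod_cast Iff.rfl

/-- Lower/upper corners of the rescaled box. -/
def crn (a : Fin d → ℝ) (ε : ℝ) : Zd d := fun i => ⌈a i / ε⌉

theorem mem_halfBox_iff {ε : ℝ} (hε : 0 < ε) (a b : Fin d → ℝ) (z : Zd d) :
    ε • toRd z ∈ halfBox a b ↔ z ∈ ibox (crn a ε) (crn b ε) := by
  rw [mem_ibox]
  simp only [halfBox, mem_ofPred_eq, PiLp.smul_apply, toRd_apply, smul_eq_mul, crn]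
  refine forall_congr' fun i => and_congr ?_ ?_
  · rw [Int.ceil_le, div_le_iff₀' hε]
  · rw [Int.lt_ceil, lt_div_iff₀' hε]

theorem cornerTo_crn (a : Fin d → ℝ) : CornerTo (crn a) a := by
  intro i
  have h2 : Tendsto (fun ε : ℝ => a i + ε) (𝓝[>] 0) (𝓝 (a i)) := by
    have : Tendsto (fun ε : ℝ => a i + ε) (𝓝 0) (𝓝 (a i + 0)) := tendsto_id.const_add _
    rw [add_zero] at this
    exact tendsto_nhdsWithin_of_tendsto_nhds this
  refine tendsto_of_tendsto_of_tendsto_of_le_of_le' tendsto_const_nhds h2 ?_ ?_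
  · filter_upwards [self_mem_nhdsWithin] with ε hε
    have hε : 0 < ε := hε
    rw [← div_le_iff₀' hε]
    exact Int.le_ceil _
  · filter_upwards [self_mem_nhdsWithin] with ε hε
    have hε : 0 < ε := hε
    have := (Int.ceil_lt_add_one (a i / ε)).le
    calc ε * (crn a ε i : ℝ) ≤ ε * (a i / ε + 1) := by unfold crn; gcongr
      _ = a i + ε := by field_simp

theorem tsum_ite_ibox {A : Zd d → Prop} {L M : Zd d} (h : ∀ z, A z ↔ z ∈ ibox L M) (f : Zd d → ℝ) :
    (∑' z : Zd d, if A z then f z else 0) = ∑ z ∈ ibox L M, f z := by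
  rw [tsum_eq_sum (s := ibox L M)]
  · exact Finset.sum_congr rfl fun z hz => if_pos ((h z).mpr hz)
  · intro z hz
    exact if_neg fun hA => hz ((h z).mp hA)

theorem energy1_cube (τ : Zd d → Ω → Ω) (E0 : Finset (Zd d)) (V : Zd d → Ω → Rn n → ℝ)
    (F : Rd d →L[ℝ] Rn n) (k : ℕ) (φ : Zd d → Rn n) (ω : Ω) :
    energy1 τ E0 V ω (fun z => F (toRd z) + φ z) (cube d k) = cellEn τ E0 V F k φ ω := by
  unfold energy1 cellEn
  rw [tsum_ite_ibox (mem_cube_iff k)]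
  refine Finset.sum_congr rfl fun z _ => Finset.sum_congr rfl fun b _ => ?_
  beta_reduce
  rw [toRd_add, map_add]
  congr 2; abel

theorem energyE_box (τ : Zd d → Ω → Ω) (E0 : Finset (Zd d)) (V : Zd d → Ω → Rn n → ℝ)
    (F : Rd d →L[ℝ] Rn n) (ψ : Zd d → Rn n) (c : Rn n) (ω : Ω) (a b : Fin d → ℝ) {ε : ℝ}
    (hε : 0 < ε) :
    energyE τ E0 V ε ω (fun z => F (ε • toRd z) + c + ε • ψ z) (halfBox a b) =
      ε ^ d * ∑ z ∈ ibox (crn a ε) (crn b ε),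
        locE E0 V F (τ z ω) (fun b => ψ (z + b) - ψ z) := by
  unfold energyE
  rw [tsum_ite_ibox (mem_halfBox_iff hε a b)]
  congr 1
  refine Finset.sum_congr rfl fun z _ => Finset.sum_congr rfl fun b _ => ?_
  congr 1
  beta_reduce
  rw [toRd_add, smul_add, map_add, map_smul, map_smul]
  have : ε • F (toRd z) + ε • F (toRd b) + c + ε • ψ (z + b) - (ε • F (toRd z) + c + ε • ψ z)
      = ε • (F (toRd b) + (ψ (z + b) - ψ z)) := by
    rw [smul_add, smul_sub]; abel
  rw [this, smul_smul, mul_inv, mul_comm ε⁻¹, mul_assoc, inv_mul_cancel₀ hε.ne', mul_one]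

theorem norm_le_irange (E0 : Finset (Zd d)) {b : Zd d} (hb : b ∈ E0) : ‖toRd b‖ ≤ irange d E0 := by
  unfold irange
  refine le_max_of_le_right (le_csSup ?_ ⟨b, hb, rfl⟩)
  exact (E0.finite_toSet.image _).bddAbove

theorem Adm.zero_of_notMem {E0 : Finset (Zd d)} {A : Set (Rd d)} {φ : Zd d → Rn n}
    (h : Adm E0 A φ) {w : Zd d} (hw : toRd w ∉ A) : φ w = 0 := by
  apply h
  rw [infDist_zero_of_mem hw]
  exact le_max_of_le_left (by positivity)

theorem Adm.zero_of_near {E0 : Finset (Zd d)} {A : Set (Rd d)} {φ : Zd d → Rn n}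
    (h : Adm E0 A φ) {w b : Zd d} (hb : b ∈ E0) (hw : toRd w ∉ A) : φ (w + b) = 0 := by
  apply h
  refine (infDist_le_dist_of_mem hw).trans ?_
  rw [toRd_add, dist_eq_norm, add_sub_cancel_left]
  exact norm_le_irange E0 hb

/-- The cell base point with offset `x`. -/
def base (k : ℕ) (x z : Zd d) : Zd d := fun i => z i - (z i - x i) % (k : ℤ)

theorem base_mem {k : ℕ} (hk : 0 < k) (x z : Zd d) :
    z - base k x z ∈ ibox (0 : Zd d) (fun _ => (k : ℤ)) := by
  rw [mem_ibox]
  intro i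
  have hk' : (0 : ℤ) < k := by exact_mod_cast hk
  have h1 := Int.emod_nonneg (z i - x i) hk'.ne'
  have h2 := Int.emod_lt_of_pos (z i - x i) hk'
  simp only [base, Pi.sub_apply, Pi.zero_apply]
  omega

theorem base_eq {k : ℕ} (x z v : Zd d)
    (hv : z - base k x v ∈ ibox (0 : Zd d) (fun _ => (k : ℤ))) : base k x z = base k x v := by
  rw [mem_ibox] at hv
  ext i
  have h := hv i
  simp only [base, Pi.sub_apply, Pi.zero_apply] at h ⊢
  set q := (v i - x i) % (k : ℤ) with hq
  have h1 : z i - x i = (z i - (v i - q)) + k * ((v i - x i) / k) := by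
    have := Int.emod_add_mul_ediv (v i - x i) k
    rw [← hq] at this
    linarith
  have h2 : (z i - x i) % (k : ℤ) = z i - (v i - q) := by
    rw [h1, Int.add_mul_emod_self_left, Int.emod_eq_of_lt h.1 h.2]
  rw [h2]; ring

/-- The patched corrector. -/
def patch (k : ℕ) (I : Finset (Zd d)) (Φ : Zd d → Zd d → Rn n) (x : Zd d) : Zd d → Rn n :=
  fun z => if base k x z ∈ I then Φ (base k x z) (z - base k x z) else 0

theorem patch_shift {E0 : Finset (Zd d)} {k : ℕ} (I : Finset (Zd d))
    (Φ : Zd d → Zd d → Rn n)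
    (hΦ : ∀ y, Adm E0 (cube d k) (Φ y)) (x z : Zd d) {b : Zd d} (hb : b ∈ E0) :
    patch k I Φ x (z + b) =
      if base k x z ∈ I then Φ (base k x z) (z + b - base k x z) else 0 := by
  by_cases h : base k x (z + b) = base k x z
  · unfold patch; rw [h]
  · have h1 : Φ (base k x (z + b)) (z + b - base k x (z + b)) = 0 := by
      rw [show z + b - base k x (z + b) = (z - base k x (z + b)) + b by abel]
      refine (hΦ _).zero_of_near hb ?_
      rw [mem_cube_iff]
      intro hc
      exact h (base_eq x z (z + b) hc).symm
    have h2 : Φ (base k x z) (z + b - base k x z) = 0 := by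
      refine (hΦ _).zero_of_notMem ?_
      rw [mem_cube_iff]
      intro hc
      exact h (base_eq x (z + b) z hc)
    unfold patch
    rw [h1, h2]; simp

theorem locE_nonneg {E0 : Finset (Zd d)} {V : Zd d → Ω → Rn n → ℝ} (F : Rd d →L[ℝ] Rn n)
    (hVnn : ∀ b ∈ E0, ∀ (ω : Ω) (r : Rn n), 0 ≤ V b ω r) (ω : Ω) (D : Zd d → Rn n) :
    0 ≤ locE E0 V F ω D := Finset.sum_nonneg fun b hb => hVnn b hb _ _

theorem exists_patch (τ : Zd d → Ω → Ω) (hτadd : ∀ x y : Zd d, τ (x + y) = τ x ∘ τ y)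
    (E0 : Finset (Zd d)) (V : Zd d → Ω → Rn n → ℝ) (F : Rd d →L[ℝ] Rn n)
    (hVnn : ∀ b ∈ E0, ∀ (ω : Ω) (r : Rn n), 0 ≤ V b ω r)
    {k : ℕ} (hk : 0 < k) (Φ : Zd d → Zd d → Rn n) (hΦ : ∀ y, Adm E0 (cube d k) (Φ y))
    (L M K : Zd d) (hK : K = fun _ => (k : ℤ)) (ω : Ω) :
    ∃ ψ : Zd d → Rn n,
      (∀ z, ψ z = 0 ∨ ∃ y ∈ ibox L (M - K), ψ z = Φ y (z - y)) ∧
      ∑ z ∈ ibox L M, locE E0 V F (τ z ω) (fun b => ψ (z + b) - ψ z) ≤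
        ((k : ℝ) ^ d)⁻¹ * ∑ y ∈ ibox L (M - K), cellEn τ E0 V F k (Φ y) (τ y ω) +
        (∑ z ∈ ibox L M, locE E0 V F (τ z ω) (fun _ => 0) -
          ∑ z ∈ ibox (L + K) (M - K), locE E0 V F (τ z ω) (fun _ => 0)) := by
  have hk' : (0 : ℤ) < k := by exact_mod_cast hk
  set I := ibox L (M - K) with hI
  set C := ibox (0 : Zd d) K with hC
  have hC' : ibox (0 : Zd d) (fun _ => (k : ℤ)) = C := by rw [hC, hK]
  set h : Zd d → ℝ := fun z => locE E0 V F (τ z ω) (fun _ => 0) with hh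
  have hh0 : ∀ z, 0 ≤ h z := fun z => locE_nonneg F hVnn _ _
  set T : Zd d → Zd d → ℝ := fun y z =>
    locE E0 V F (τ z ω) (fun b => Φ y (z + b - y) - Φ y (z - y)) with hT
  set Q : ℝ := ∑ z ∈ ibox L M, h z - ∑ z ∈ ibox (L + K) (M - K), h z with hQ
  set S : ℝ := ∑ y ∈ I, cellEn τ E0 V F k (Φ y) (τ y ω) with hS
  have hval : ∀ x z, locE E0 V F (τ z ω) (fun b => patch k I Φ x (z + b) - patch k I Φ x z) =
      (if base k x z ∈ I then T (base k x z) z else 0) +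
        (if base k x z ∈ I then 0 else h z) := by
    intro x z
    have e1 : locE E0 V F (τ z ω) (fun b => patch k I Φ x (z + b) - patch k I Φ x z) =
      locE E0 V F (τ z ω) (fun b =>
        (if base k x z ∈ I then Φ (base k x z) (z + b - base k x z) else 0) -
        (if base k x z ∈ I then Φ (base k x z) (z - base k x z) else 0)) := by
      unfold locE
      refine Finset.sum_congr rfl fun b hb => ?_
      beta_reduce
      rw [patch_shift I Φ hΦ x z hb]
      rfl
    rw [e1]
    by_cases hz : base k x z ∈ I
    · simp [hz, hT]
    · simp [hz, hh]
  have hcard : (C.card : ℝ) = (k : ℝ) ^ d := by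
    rw [hC, card_ibox, hK]; simp
  have hsub : ibox (L + K) (M - K) ⊆ ibox L M := by
    intro z hz
    rw [mem_ibox] at hz ⊢
    intro i
    have := hz i
    simp only [hK, Pi.add_apply, Pi.sub_apply] at this
    omega
  have hbd : ∀ x, ∑ z ∈ ibox L M, (if base k x z ∈ I then 0 else h z) ≤ Q := by
    intro x
    rw [hQ, ← Finset.sum_sdiff (f := h) hsub, add_sub_cancel_right, Finset.sum_ite, Finset.sum_const_zero,
      zero_add]
    refine Finset.sum_le_sum_of_subset_of_nonneg ?_ fun _ _ _ => hh0 _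
    intro z hz
    rw [Finset.mem_filter] at hz
    rw [Finset.mem_sdiff]
    refine ⟨hz.1, fun hc => hz.2 ?_⟩
    have hb := base_mem hk x z
    rw [hI]
    rw [mem_ibox] at hb hc ⊢
    intro i
    have h1 := hb i
    have h2 := hc i
    simp only [hK, Pi.add_apply, Pi.sub_apply, Pi.zero_apply] at h1 h2 ⊢
    omega
  have hfirst : ∑ x ∈ C, ∑ z ∈ ibox L M, (if base k x z ∈ I then T (base k x z) z else 0) = S := by
    rw [Finset.sum_comm]
    have e1 : ∀ z, ∑ x ∈ C, (if base k x z ∈ I then T (base k x z) z else 0) =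
        ∑ w ∈ C, (if z - w ∈ I then T (z - w) z else 0) := by
      intro z
      have hmem : ∀ x : Zd d, (fun i => (z i - x i) % (k : ℤ)) ∈ C := by
        intro x
        rw [hC, mem_ibox]
        intro i
        rw [hK]
        exact ⟨Int.emod_nonneg _ hk'.ne', Int.emod_lt_of_pos _ hk'⟩
      have hinv : ∀ x ∈ C, ∀ i, (z i - (z i - x i) % (k : ℤ)) % (k : ℤ) = x i := by
        intro x hx i
        rw [hC, mem_ibox] at hx
        have := hx i
        rw [hK] at this
        rw [Int.sub_emod_emod, sub_sub_cancel]
        exact Int.emod_eq_of_lt this.1 this.2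
      refine Finset.sum_bij' (fun x _ => fun i => (z i - x i) % (k : ℤ))
        (fun x _ => fun i => (z i - x i) % (k : ℤ)) (fun x _ => hmem x) (fun x _ => hmem x)
        (fun x hx => funext fun i => hinv x hx i) (fun x hx => funext fun i => hinv x hx i) ?_
      intro x _
      rfl
    rw [Finset.sum_congr rfl fun z _ => e1 z, Finset.sum_comm]
    have e2 : ∀ w ∈ C, ∑ z ∈ ibox L M, (if z - w ∈ I then T (z - w) z else 0) =
        ∑ y ∈ I, T y (y + w) := by
      intro w hw
      rw [← Finset.sum_filter]
      refine Finset.sum_bij' (fun z _ => z - w) (fun y _ => y + w) ?_ ?_ ?_ ?_ ?_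
      · intro z hz; exact (Finset.mem_filter.mp hz).2
      · intro y hy
        rw [Finset.mem_filter, add_sub_cancel_right]
        refine ⟨?_, hy⟩
        rw [hC, mem_ibox] at hw
        rw [hI, mem_ibox] at hy
        rw [mem_ibox]
        intro i
        have h1 := hw i
        have h2 := hy i
        simp only [hK, Pi.add_apply, Pi.sub_apply, Pi.zero_apply] at h1 h2 ⊢
        omega
      · intro z _; simp
      · intro z _; simp
      · intro z _; simp
    rw [Finset.sum_congr rfl e2, Finset.sum_comm]
    rw [hS]
    refine Finset.sum_congr rfl fun y _ => ?_
    unfold cellEn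
    rw [hC']
    refine Finset.sum_congr rfl fun w _ => ?_
    simp only [hT]
    rw [← Function.comp_apply (f := τ w), ← hτadd, add_comm w y]
    congr 1
    ext1 b
    rw [show y + w + b - y = w + b by abel, show y + w - y = w by abel]
  have htot : ∑ x ∈ C, ∑ z ∈ ibox L M,
      locE E0 V F (τ z ω) (fun b => patch k I Φ x (z + b) - patch k I Φ x z) ≤
      ∑ x ∈ C, (((k : ℝ) ^ d)⁻¹ * S + Q) := by
    simp only [hval, Finset.sum_add_distrib]
    rw [hfirst, Finset.sum_const, Finset.sum_const, nsmul_eq_mul, nsmul_eq_mul, hcard]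
    have hkd : (0 : ℝ) < (k : ℝ) ^ d := by positivity
    have : (k : ℝ) ^ d * (((k : ℝ) ^ d)⁻¹ * S) = S := by field_simp
    rw [this]
    have h3 : ∑ x ∈ C, ∑ z ∈ ibox L M, (if base k x z ∈ I then 0 else h z) ≤ ∑ x ∈ C, Q :=
      Finset.sum_le_sum fun x _ => hbd x
    rw [Finset.sum_const, nsmul_eq_mul, hcard] at h3
    linarith
  have hCne : C.Nonempty := ⟨0, by rw [hC, mem_ibox]; intro i; simp [hK, hk]⟩
  obtain ⟨x, _, hx⟩ := Finset.exists_le_of_sum_le hCne htot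
  refine ⟨patch k I Φ x, fun z => ?_, hx⟩
  by_cases hz : base k x z ∈ I
  · right; exact ⟨base k x z, hz, by simp [patch, hz]⟩
  · left; simp [patch, hz]

theorem bdry_dist (E0 : Finset (Zd d)) (hd : 0 < d) {ε : ℝ} (hε : 0 < ε) (a b : Fin d → ℝ)
    (k : ℕ) (K : Zd d) (hK : K = fun _ => (k : ℤ)) (y z : Zd d)
    (hy : y ∈ ibox (crn a ε) (crn b ε - K))
    (hz : infDist (ε • toRd z) (halfBox a b)ᶜ ≤ ε * irange d E0) :
    infDist (toRd (z - y)) (cube d k)ᶜ ≤ irange d E0 := by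
  refine le_of_forall_pos_le_add fun η hη => ?_
  have hne : ((halfBox a b)ᶜ).Nonempty := by
    refine ⟨WithLp.toLp 2 b, fun h => ?_⟩
    exact lt_irrefl _ (h ⟨0, hd⟩).2
  have hlt : infDist (ε • toRd z) (halfBox a b)ᶜ < ε * (irange d E0 + η) := by
    refine hz.trans_lt ?_
    rw [mul_add]; linarith [mul_pos hε hη]
  obtain ⟨w, hw, hwd⟩ := (infDist_lt_iff hne).mp hlt
  have hv : ε⁻¹ • w - toRd y ∈ (cube d k)ᶜ := by
    intro hc
    apply hw
    intro i
    have h1 := hc i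
    rw [mem_ibox] at hy
    have h2 := hy i
    simp only [PiLp.sub_apply, PiLp.smul_apply, smul_eq_mul, toRd_apply] at h1
    simp only [hK, Pi.sub_apply, crn] at h2
    have h3 : a i / ε ≤ y i := Int.ceil_le.mp h2.1
    have h4 : ((y i + k : ℤ) : ℝ) < b i / ε := Int.lt_ceil.mp (by linarith [h2.2])
    push_cast at h4
    have h5 : a i / ε ≤ w i / ε := by rw [div_eq_inv_mul (w i)]; linarith
    have h6 : w i / ε < b i / ε := by rw [div_eq_inv_mul (w i)]; linarith
    exact ⟨(div_le_div_iff_of_pos_right hε).mp h5, (div_lt_div_iff_of_pos_right hε).mp h6⟩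
  refine (infDist_le_dist_of_mem hv).trans ?_
  have : toRd (z - y) - (ε⁻¹ • w - toRd y) = ε⁻¹ • (ε • toRd z - w) := by
    rw [toRd_sub, smul_sub, smul_smul, inv_mul_cancel₀ hε.ne', one_smul]; abel
  rw [dist_eq_norm, this, norm_smul, norm_inv, Real.norm_of_nonneg hε.le, inv_mul_le_iff₀ hε,
    ← dist_eq_norm]
  exact hwd.le

/-- Running minimum. -/
def runmin (e : ℕ → Ω → ℝ) : ℕ → Ω → ℝ
  | 0 => e 0
  | J + 1 => fun ω => min (runmin e J ω) (e (J + 1) ω)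

theorem runmin_le (e : ℕ → Ω → ℝ) (ω : Ω) {j J : ℕ} (h : j ≤ J) : runmin e J ω ≤ e j ω := by
  induction J with
  | zero => rw [Nat.le_zero.mp h]; rfl
  | succ J ih =>
    rcases Nat.lt_or_ge J j with h1 | h1
    · have : j = J + 1 := by omega
      rw [this]; exact min_le_right _ _
    · exact (min_le_left _ _).trans (ih h1)

theorem runmin_eq (e : ℕ → Ω → ℝ) (ω : Ω) (J : ℕ) : ∃ j, j ≤ J ∧ runmin e J ω = e j ω := by
  induction J with
  | zero => exact ⟨0, le_rfl, rfl⟩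
  | succ J ih =>
    obtain ⟨j, hj, h⟩ := ih
    rcases min_choice (runmin e J ω) (e (J + 1) ω) with h1 | h1
    · exact ⟨j, by omega, h1.trans h⟩
    · exact ⟨J + 1, le_rfl, h1⟩

theorem runmin_meas (e : ℕ → Ω → ℝ) (he : ∀ j, Measurable (e j)) (J : ℕ) :
    Measurable (runmin e J) := by
  induction J with
  | zero => exact he 0
  | succ J ih => exact ih.min (he _)

theorem runmin_integrable (P : Measure Ω) (e : ℕ → Ω → ℝ) (he : ∀ j, Integrable (e j) P) (J : ℕ) :
    Integrable (runmin e J) P := by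
  induction J with
  | zero => exact he 0
  | succ J ih => exact ih.inf (he _)

theorem cellEn_meas (τ : Zd d → Ω → Ω) (E0 : Finset (Zd d)) (V : Zd d → Ω → Rn n → ℝ)
    (F : Rd d →L[ℝ] Rn n) (hτ : ∀ z, Measurable (τ z))
    (hV : ∀ b ∈ E0, ∀ r, Measurable fun ω => V b ω r) (k : ℕ) (φ : Zd d → Rn n) :
    Measurable (cellEn τ E0 V F k φ) := by
  unfold cellEn locE
  exact Finset.measurable_sum _ fun z _ => Finset.measurable_sum _ fun b hb =>
    (hV b hb _).comp (hτ z)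

theorem cellEn_int (P : Measure Ω) (τ : Zd d → Ω → Ω) (E0 : Finset (Zd d))
    (V : Zd d → Ω → Rn n → ℝ)
    (F : Rd d →L[ℝ] Rn n) (hτ : ∀ z, MeasurePreserving (τ z) P P)
    (hV : ∀ b ∈ E0, ∀ r, Integrable (fun ω => V b ω r) P) (k : ℕ) (φ : Zd d → Rn n) :
    Integrable (cellEn τ E0 V F k φ) P := by
  unfold cellEn locE
  exact integrable_finsetSum _ fun z _ => integrable_finsetSum _ fun b hb =>
    (hτ z).integrable_comp_of_integrable (hV b hb _)

theorem cellEn_nonneg (τ : Zd d → Ω → Ω) {E0 : Finset (Zd d)}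
    {V : Zd d → Ω → Rn n → ℝ} (F : Rd d →L[ℝ] Rn n)
    (hVnn : ∀ b ∈ E0, ∀ (ω : Ω) (r : Rn n), 0 ≤ V b ω r) (k : ℕ) (φ : Zd d → Rn n) (ω : Ω) :
    0 ≤ cellEn τ E0 V F k φ ω := Finset.sum_nonneg fun _ _ => locE_nonneg F hVnn _ _

theorem mF_eq (τ : Zd d → Ω → Ω) (E0 : Finset (Zd d))
    (V : Zd d → Ω → Rn n → ℝ) (F : Rd d →L[ℝ] Rn n) (k : ℕ) (ω : Ω) :
    mF τ E0 V ω F (cube d k) =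
      ⨅ φ : {φ : Zd d → Rn n // Adm E0 (cube d k) φ}, cellEn τ E0 V F k φ.1 ω := by
  unfold mF
  simp only [energy1_cube]
  rfl

theorem mF_le (τ : Zd d → Ω → Ω) {E0 : Finset (Zd d)}
    {V : Zd d → Ω → Rn n → ℝ} (F : Rd d →L[ℝ] Rn n)
    (hVnn : ∀ b ∈ E0, ∀ (ω : Ω) (r : Rn n), 0 ≤ V b ω r) (k : ℕ) (ω : Ω) {φ : Zd d → Rn n}
    (hφ : Adm E0 (cube d k) φ) : mF τ E0 V ω F (cube d k) ≤ cellEn τ E0 V F k φ ω := by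
  rw [mF_eq]
  exact ciInf_le (f := fun φ : {φ : Zd d → Rn n // Adm E0 (cube d k) φ} =>
    cellEn τ E0 V F k φ.1 ω)
    ⟨0, by rintro _ ⟨φ, rfl⟩; exact cellEn_nonneg τ F hVnn k _ ω⟩ ⟨φ, hφ⟩

theorem mF_nonneg (τ : Zd d → Ω → Ω) {E0 : Finset (Zd d)}
    {V : Zd d → Ω → Rn n → ℝ} (F : Rd d →L[ℝ] Rn n)
    (hVnn : ∀ b ∈ E0, ∀ (ω : Ω) (r : Rn n), 0 ≤ V b ω r) (k : ℕ) (ω : Ω) :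
    0 ≤ mF τ E0 V ω F (cube d k) := by
  rw [mF_eq]
  exact Real.iInf_nonneg fun φ => cellEn_nonneg τ F hVnn k _ ω

theorem adm_zero (E0 : Finset (Zd d)) (A : Set (Rd d)) : Adm E0 A (fun _ => (0 : Rn n)) :=
  fun _ _ => rfl

theorem exists_family (P : Measure Ω) [IsProbabilityMeasure P] (τ : Zd d → Ω → Ω)
    (hτmp : ∀ z : Zd d, MeasurePreserving (τ z) P P)
    (E0 : Finset (Zd d)) (V : Zd d → Ω → Rn n → ℝ) (F : Rd d →L[ℝ] Rn n)
    (hVcont : ∀ b ∈ E0, ∀ ω : Ω, Continuous (V b ω))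
    (hVnn : ∀ b ∈ E0, ∀ (ω : Ω) (r : Rn n), 0 ≤ V b ω r)
    (hVm : ∀ b ∈ E0, ∀ r, Measurable fun ω => V b ω r)
    (hVi : ∀ b ∈ E0, ∀ r, Integrable (fun ω => V b ω r) P) (k : ℕ) (δ : ℝ)
    (hδ : ∫ ω, mF τ E0 V ω F (cube d k) ∂P < δ) :
    ∃ (φ : ℕ → Zd d → Rn n) (J : ℕ), (∀ j, Adm E0 (cube d k) (φ j)) ∧
      ∫ ω, runmin (fun j => cellEn τ E0 V F k (φ j)) J ω ∂P < δ := by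
  let X := {φ : Zd d → Rn n // Adm E0 (cube d k) φ}
  haveI : Nonempty X := ⟨⟨_, adm_zero E0 _⟩⟩
  haveI : Countable (Zd d) := by unfold Zd; infer_instance
  haveI : SecondCountableTopology (Zd d → Rn n) := inferInstance
  haveI : SecondCountableTopology X := TopologicalSpace.Subtype.secondCountableTopology _
  haveI : TopologicalSpace.SeparableSpace X := inferInstance
  let s : ℕ → X := TopologicalSpace.denseSeq X
  have hs : DenseRange s := TopologicalSpace.denseRange_denseSeq X
  set e : ℕ → Ω → ℝ := fun j => cellEn τ E0 V F k (s j).1 with he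
  have hem : ∀ j, Measurable (e j) := fun j =>
    cellEn_meas τ E0 V F (fun z => (hτmp z).measurable) hVm k _
  have hei : ∀ j, Integrable (e j) P := fun j => cellEn_int P τ E0 V F hτmp hVi k _
  have hpt : ∀ ω, Tendsto (fun J => runmin e J ω) atTop (𝓝 (mF τ E0 V ω F (cube d k))) := by
    intro ω
    have hcont : Continuous fun φ : X => cellEn τ E0 V F k φ.1 ω := by
      unfold cellEn locE
      refine continuous_finsetSum _ fun z _ => continuous_finsetSum _ fun b hb => ?_
      refine (hVcont b hb _).comp ?_
      have h1 : ∀ z : Zd d, Continuous fun φ : X => φ.1 z := fun z =>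
        (continuous_apply z).comp continuous_subtype_val
      have h2 : Continuous fun φ : X => F (toRd b) + (φ.1 (z + b) - φ.1 z) :=
        continuous_const.add ((h1 _).sub (h1 _))
      exact h2.const_smul ((‖toRd b‖)⁻¹)
    rw [Metric.tendsto_atTop]
    intro η hη
    have hex : ∃ φ : X, cellEn τ E0 V F k φ.1 ω < mF τ E0 V ω F (cube d k) + η := by
      apply exists_lt_of_ciInf_lt
      rw [← mF_eq]
      linarith
    obtain ⟨j, hj⟩ := hs.exists_mem_open (isOpen_lt hcont continuous_const) hex
    refine ⟨j, fun J hJ => ?_⟩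
    have h1 : runmin e J ω ≤ e j ω := runmin_le e ω hJ
    have hj : e j ω < mF τ E0 V ω F (cube d k) + η := hj
    obtain ⟨i, _, hi⟩ := runmin_eq e ω J
    have h2 : mF τ E0 V ω F (cube d k) ≤ e i ω := mF_le τ F hVnn k ω (s i).2
    rw [Real.dist_eq, abs_lt]
    constructor <;> linarith
  have hlim : Tendsto (fun J => ∫ ω, runmin e J ω ∂P) atTop
      (𝓝 (∫ ω, mF τ E0 V ω F (cube d k) ∂P)) := by
    refine tendsto_integral_of_dominated_convergence (e 0)
      (fun J => (runmin_meas e hem J).aestronglyMeasurable) (hei 0) ?_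
      (Eventually.of_forall hpt)
    intro J
    refine Eventually.of_forall fun ω => ?_
    obtain ⟨i, _, hi⟩ := runmin_eq e ω J
    rw [Real.norm_of_nonneg]
    · exact runmin_le e ω (Nat.zero_le J)
    · rw [hi]; exact cellEn_nonneg τ F hVnn k _ ω
  obtain ⟨J, hJ⟩ := (hlim.eventually (gt_mem_nhds hδ)).exists
  exact ⟨fun j => (s j).1, J, fun j => (s j).2, hJ⟩

theorem adm_bdd {E0 : Finset (Zd d)} {k : ℕ} {φ : Zd d → Rn n} (h : Adm E0 (cube d k) φ) :
    ∃ B : ℝ, 0 ≤ B ∧ ∀ z, ‖φ z‖ ≤ B := by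
  refine ⟨∑ z ∈ ibox (0 : Zd d) (fun _ => (k : ℤ)), ‖φ z‖, by positivity, fun z => ?_⟩
  by_cases hz : z ∈ ibox (0 : Zd d) (fun _ => (k : ℤ))
  · exact Finset.single_le_sum (f := fun z => ‖φ z‖) (fun _ _ => norm_nonneg _) hz
  · rw [h.zero_of_notMem (by rwa [mem_cube_iff]), norm_zero]
    positivity

/-- Boundary condition for the corrector at scale `ε`. -/
def Bdry (E0 : Finset (Zd d)) (a b : Fin d → ℝ) (ε : ℝ) (ψ : Zd d → Rn n) : Prop :=
  ∀ z : Zd d, infDist (ε • toRd z) (halfBox a b)ᶜ ≤ ε * irange d E0 → ψ z = 0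

/-- Rescaled energy in terms of the corrector. -/
def enB (τ : Zd d → Ω → Ω) (E0 : Finset (Zd d)) (V : Zd d → Ω → Rn n → ℝ)
    (F : Rd d →L[ℝ] Rn n) (ω : Ω) (a b : Fin d → ℝ) (ε : ℝ) (ψ : Zd d → Rn n) : ℝ :=
  ε ^ d * ∑ z ∈ ibox (crn a ε) (crn b ε), locE E0 V F (τ z ω) (fun b => ψ (z + b) - ψ z)

theorem upper_family (P : Measure Ω) [IsProbabilityMeasure P] (hd : 0 < d) (τ : Zd d → Ω → Ω)
    (hτadd : ∀ x y : Zd d, τ (x + y) = τ x ∘ τ y)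
    (E0 : Finset (Zd d)) (V : Zd d → Ω → Rn n → ℝ) (F : Rd d →L[ℝ] Rn n)
    (hVnn : ∀ b ∈ E0, ∀ (ω : Ω) (r : Rn n), 0 ≤ V b ω r) {k : ℕ} (hk : 0 < k)
    (φ : ℕ → Zd d → Rn n) (J : ℕ) (hφ : ∀ j, Adm E0 (cube d k) (φ j)) (ω : Ω)
    (h1 : ErgAt P τ (fun ω => locE E0 V F ω (fun _ => 0)) ω)
    (h2 : ErgAt P τ (runmin (fun j => cellEn τ E0 V F k (φ j)) J) ω)
    (a b : Fin d → ℝ) (t : ℝ)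
    (ht : bvol a b * (((k : ℝ) ^ d)⁻¹ *
      ∫ ω, runmin (fun j => cellEn τ E0 V F k (φ j)) J ω ∂P) < t) :
    ∃ B : ℝ, 0 ≤ B ∧ ∀ᶠ ε in 𝓝[>] (0 : ℝ), ∃ ψ : Zd d → Rn n, Bdry E0 a b ε ψ ∧
      (∀ z, ‖ψ z‖ ≤ B) ∧ enB τ E0 V F ω a b ε ψ ≤ t := by
  choose B hB0 hB using fun j => adm_bdd (hφ j)
  set e : ℕ → Ω → ℝ := fun j => cellEn τ E0 V F k (φ j) with he
  refine ⟨∑ j ∈ Finset.range (J + 1), B j, Finset.sum_nonneg fun j _ => hB0 j, ?_⟩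
  choose ι hι1 hι2 using fun y => runmin_eq e (τ y ω) J
  set K : Zd d := fun _ => (k : ℤ) with hK
  have cL := cornerTo_crn a
  have cM := cornerTo_crn b
  have cM' : CornerTo (fun ε => crn b ε - K) b := by
    have := cM.add (-K)
    simpa only [← sub_eq_add_neg] using this
  have l1 := h2 a b _ _ cL cM'
  have l2 := h1 a b _ _ cL cM
  have l3 := h1 a b _ _ (cL.add K) cM'
  have l4 := (l1.const_mul (((k : ℝ) ^ d)⁻¹)).add (l2.sub l3)
  rw [sub_self, add_zero, mul_left_comm] at l4
  filter_upwards [l4.eventually (gt_mem_nhds ht), self_mem_nhdsWithin] with ε hε hε0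
  have hε0 : 0 < ε := hε0
  obtain ⟨ψ, hψ1, hψ2⟩ := exists_patch τ hτadd E0 V F hVnn hk (fun y => φ (ι y))
    (fun y => hφ _) (crn a ε) (crn b ε) K hK ω
  refine ⟨ψ, ?_, ?_, ?_⟩
  · intro z hz
    rcases hψ1 z with h | ⟨y, hy, h⟩
    · exact h
    · rw [h]
      exact hφ _ _ (bdry_dist E0 hd hε0 a b k K hK y z hy hz)
  · intro z
    rcases hψ1 z with h | ⟨y, hy, h⟩
    · rw [h, norm_zero]; exact Finset.sum_nonneg fun j _ => hB0 j
    · rw [h]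
      refine (hB _ _).trans ?_
      exact Finset.single_le_sum (f := B) (fun j _ => hB0 j)
        (Finset.mem_range.mpr (Nat.lt_succ_of_le (hι1 y)))
  · have hs : ∀ y, cellEn τ E0 V F k (φ (ι y)) (τ y ω) = runmin e J (τ y ω) :=
      fun y => (hι2 y).symm
    simp only [hs] at hψ2
    unfold enB
    refine (mul_le_mul_of_nonneg_left hψ2 (pow_nonneg hε0.le d)).trans (le_of_eq_of_le ?_ hε.le)
    ring

theorem vol_halfBox (a b : Fin d → ℝ) : (volume (halfBox a b)).toReal = bvol a b := by
  have h1 : halfBox a b = (MeasurableEquiv.toLp 2 (Fin d → ℝ)).symm ⁻¹'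
      (Set.univ.pi fun i => Set.Ico (a i) (b i)) := by
    ext x
    simp only [halfBox, mem_ofPred_eq, Set.mem_preimage, Set.mem_univ_pi, Set.mem_Ico]
    rfl
  rw [h1, (EuclideanSpace.volume_preserving_symm_measurableEquiv_toLp (Fin d)).measure_preimage_equiv,
    Real.volume_pi_Ico, ENNReal.toReal_prod]
  unfold bvol
  refine Finset.prod_congr rfl fun i _ => ?_
  rw [ENNReal.toReal_ofReal']

theorem exists_choice {X : Type*} (S : ℝ → X → Prop) (C : ℝ → X → ℝ) (hC : ∀ ε, 0 < ε → ∀ x, 0 ≤ C ε x)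
    (hS : ∀ ε, ∃ x, S ε x)
    (h : ∀ δ > 0, ∀ᶠ ε in 𝓝[>] (0 : ℝ), ∃ x, S ε x ∧ C ε x ≤ δ) :
    ∃ x : ℝ → X, (∀ ε, S ε (x ε)) ∧ Tendsto (fun ε => C ε (x ε)) (𝓝[>] (0 : ℝ)) (𝓝 0) := by
  have hex : ∀ ε : ℝ, ∃ x, S ε x ∧ (0 < ε → ∀ y, S ε y → C ε x ≤ C ε y + ε) := by
    intro ε
    by_cases hε : 0 < ε
    · obtain ⟨x0, hx0⟩ := hS ε
      haveI : Nonempty {x // S ε x} := ⟨⟨x0, hx0⟩⟩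
      obtain ⟨x, hx⟩ := exists_lt_of_ciInf_lt (f := fun x : {x // S ε x} => C ε x.1)
        (a := (⨅ x : {x // S ε x}, C ε x.1) + ε) (by linarith)
      refine ⟨x.1, x.2, fun _ y hy => ?_⟩
      have := ciInf_le (f := fun x : {x // S ε x} => C ε x.1)
        ⟨0, by rintro _ ⟨x, rfl⟩; exact hC ε hε x.1⟩ ⟨y, hy⟩
      simp only at this hx
      linarith
    · obtain ⟨x0, hx0⟩ := hS ε
      exact ⟨x0, hx0, fun h => absurd h hε⟩
  choose x hx1 hx2 using hex
  refine ⟨x, hx1, ?_⟩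
  rw [Metric.tendsto_nhds]
  intro δ hδ
  filter_upwards [h (δ / 2) (half_pos hδ), Ioo_mem_nhdsGT (half_pos hδ)] with ε hε1 hε2
  obtain ⟨y, hy1, hy2⟩ := hε1
  have := hx2 ε hε2.1 y hy1
  have h0 := hC ε hε2.1 (x ε)
  rw [Real.dist_eq, sub_zero, abs_of_nonneg h0]
  linarith [hε2.2]

theorem ivt_pick (f : ℝ → ℝ) (hf : Continuous f) (t η : ℝ) (hη : 0 ≤ η) (h0 : t - η ≤ f 0)
    (h1 : f 1 ≤ t + η) : ∃ s ∈ Set.Icc (0 : ℝ) 1, |f s - t| ≤ η := by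
  by_cases ha : f 0 ≤ t + η
  · exact ⟨0, by simp, abs_le.mpr ⟨by linarith, by linarith⟩⟩
  by_cases hb : t - η ≤ f 1
  · exact ⟨1, by simp, abs_le.mpr ⟨by linarith, by linarith⟩⟩
  push Not at ha hb
  obtain ⟨s, hs, hst⟩ := intermediate_value_Icc' (zero_le_one' ℝ) hf.continuousOn
    (show t ∈ Set.Icc (f 1) (f 0) from ⟨by linarith, by linarith⟩)
  exact ⟨s, hs, by rw [hst]; simpa using hη⟩

theorem bvol_nonneg (a b : Fin d → ℝ) : 0 ≤ bvol a b :=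
  Finset.prod_nonneg fun _ _ => le_max_right _ _

theorem enB_cont (τ : Zd d → Ω → Ω) (E0 : Finset (Zd d)) (V : Zd d → Ω → Rn n → ℝ)
    (F : Rd d →L[ℝ] Rn n) (hVcont : ∀ b ∈ E0, ∀ ω : Ω, Continuous (V b ω)) (ω : Ω)
    (a b : Fin d → ℝ) (ε : ℝ) (ψ : Zd d → Rn n) :
    Continuous fun t : ℝ => enB τ E0 V F ω a b ε (fun z => t • ψ z) := by
  unfold enB locE
  refine Continuous.const_mul ?_ _
  refine continuous_finsetSum _ fun z _ => continuous_finsetSum _ fun b hb => ?_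
  refine (hVcont b hb _).comp ?_
  have h2 : Continuous fun t : ℝ => F (toRd b) + (t • ψ (z + b) - t • ψ z) := by fun_prop
  exact h2.const_smul ((‖toRd b‖)⁻¹)

theorem main_pt (P : Measure Ω) [IsProbabilityMeasure P] (hd : 0 < d) (τ : Zd d → Ω → Ω)
    (hτadd : ∀ x y : Zd d, τ (x + y) = τ x ∘ τ y)
    (E0 : Finset (Zd d)) (V : Zd d → Ω → Rn n → ℝ) (F : Rd d →L[ℝ] Rn n)
    (hVcont : ∀ b ∈ E0, ∀ ω : Ω, Continuous (V b ω))
    (hVnn : ∀ b ∈ E0, ∀ (ω : Ω) (r : Rn n), 0 ≤ V b ω r) (ω : Ω) (W s : ℝ) (hs : 0 < s)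
    (h1 : ErgAt P τ (fun ω => locE E0 V F ω (fun _ => 0)) ω)
    (hW : W ≤ ∫ ω, locE E0 V F ω (fun _ => 0) ∂P)
    (h2 : ∀ η : ℝ, 0 < η → ∃ (k : ℕ) (φ : ℕ → Zd d → Rn n) (J : ℕ), 0 < k ∧
      (∀ j, Adm E0 (cube d k) (φ j)) ∧
      ErgAt P τ (runmin (fun j => cellEn τ E0 V F k (φ j)) J) ω ∧
      ((k : ℝ) ^ d)⁻¹ * ∫ ω, runmin (fun j => cellEn τ E0 V F k (φ j)) J ω ∂P < W + η)
    (c : Rn n) (a b : Fin d → ℝ) :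
    ∃ u : ℝ → Zd d → Rn n,
          (∀ ε : ℝ, 0 < ε → ∀ z : Zd d,
            infDist (ε • toRd z) (halfBox a b)ᶜ ≤ ε * irange d E0 →
              u ε z = F (ε • toRd z) + c) ∧
          Tendsto (fun ε : ℝ => ε ^ d * ∑' z : Zd d,
              if ε • toRd z ∈ halfBox a b then
                ‖u ε z - (F (ε • toRd z) + c)‖ ^ s else 0)
            (𝓝[>] (0 : ℝ)) (𝓝 0) ∧
          Tendsto (fun ε : ℝ => energyE τ E0 V ε ω (u ε) (halfBox a b))
            (𝓝[>] (0 : ℝ)) (𝓝 ((volume (halfBox a b)).toReal * W)) := by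
  rw [vol_halfBox]
  set v := bvol a b with hv
  have hv0 : 0 ≤ v := bvol_nonneg a b
  let T : ℝ → (Zd d → Rn n) → ℝ := fun ε ψ =>
    ε ^ d * ∑ z ∈ ibox (crn a ε) (crn b ε), ‖ε • ψ z‖ ^ s
  have hT0 : ∀ ε, 0 < ε → ∀ ψ, 0 ≤ T ε ψ := fun ε hε ψ =>
    mul_nonneg (pow_nonneg hε.le d)
      (Finset.sum_nonneg fun z _ => Real.rpow_nonneg (norm_nonneg _) _)
  obtain ⟨ψ, hψ1, hψ2⟩ := exists_choice (X := Zd d → Rn n) (Bdry E0 a b)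
    (fun ε ψ => T ε ψ + |enB τ E0 V F ω a b ε ψ - v * W|)
    (fun ε hε ψ => add_nonneg (hT0 ε hε ψ) (abs_nonneg _))
    (fun ε => ⟨fun _ => 0, fun _ _ => rfl⟩) (by
      intro δ hδ
      obtain ⟨k, φ, J, hk, hφ, hE, hlt⟩ := h2 (δ / 4 / (v + 1)) (by positivity)
      obtain ⟨B, hB0, hB⟩ := upper_family P hd τ hτadd E0 V F hVnn hk φ J hφ ω h1 hE a b
        (v * W + δ / 2) (by
          have e1 := mul_le_mul_of_nonneg_left hlt.le hv0
          have e2 : v * (δ / 4 / (v + 1)) ≤ δ / 4 := by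
            rw [mul_div_assoc', div_le_iff₀ (by positivity)]
            nlinarith
          rw [mul_add] at e1
          linarith)
      have l1 := h1 a b _ _ (cornerTo_crn a) (cornerTo_crn b)
      have hlow : v * W - δ / 2 < v * ∫ ω, locE E0 V F ω (fun _ => 0) ∂P := by
        have := mul_le_mul_of_nonneg_left hW hv0
        linarith
      have l2 := l1.eventually (lt_mem_nhds hlow)
      have l3 : Tendsto (fun ε : ℝ => ε ^ d * ((ibox (crn a ε) (crn b ε)).card : ℝ) * (ε * B) ^ s)
          (𝓝[>] 0) (𝓝 0) := by
        have t1 := tendsto_card (cornerTo_crn a) (cornerTo_crn b)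
        have t2 : Tendsto (fun ε : ℝ => (ε * B) ^ s) (𝓝[>] 0) (𝓝 0) := by
          have : ContinuousAt (fun ε : ℝ => (ε * B) ^ s) 0 := by
            refine ContinuousAt.rpow_const (by fun_prop) (Or.inr hs.le)
          have h := this.tendsto
          simp only [zero_mul, Real.zero_rpow hs.ne'] at h
          exact tendsto_nhdsWithin_of_tendsto_nhds h
        simpa using t1.mul t2
      have l4 := l3.eventually (gt_mem_nhds (half_pos hδ))
      filter_upwards [hB, l2, l4, self_mem_nhdsWithin] with ε e1 e2 e3 hε
      have hε : 0 < ε := hε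
      obtain ⟨ψ, p1, p2, p3⟩ := e1
      obtain ⟨t, ht, htt⟩ := ivt_pick _ (enB_cont τ E0 V F hVcont ω a b ε ψ) (v * W) (δ / 2)
        (half_pos hδ).le (by
          simp only [zero_smul, enB, sub_self]
          exact e2.le) (by
          simp only [one_smul]
          exact p3)
      refine ⟨fun z => t • ψ z, fun z hz => by simp only [p1 z hz, smul_zero], ?_⟩
      have hTle : T ε (fun z => t • ψ z) ≤ δ / 2 := by
        refine le_trans ?_ e3.le
        have : ∑ z ∈ ibox (crn a ε) (crn b ε), ‖ε • t • ψ z‖ ^ s ≤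
            ((ibox (crn a ε) (crn b ε)).card : ℝ) * (ε * B) ^ s := by
          rw [← nsmul_eq_mul]
          refine Finset.sum_le_card_nsmul _ _ _ fun z _ => ?_
          refine Real.rpow_le_rpow (norm_nonneg _) ?_ hs.le
          rw [norm_smul, norm_smul, Real.norm_of_nonneg hε.le, Real.norm_of_nonneg ht.1]
          refine mul_le_mul_of_nonneg_left ?_ hε.le
          calc t * ‖ψ z‖ ≤ 1 * ‖ψ z‖ := mul_le_mul_of_nonneg_right ht.2 (norm_nonneg _)
            _ ≤ B := by rw [one_mul]; exact p2 z
        rw [mul_assoc]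
        exact mul_le_mul_of_nonneg_left this (pow_nonneg hε.le d)
      linarith)
  refine ⟨fun ε z => F (ε • toRd z) + c + ε • ψ ε z, ?_, ?_, ?_⟩
  · intro ε hε z hz
    simp only [hψ1 ε z hz, smul_zero, add_zero]
  · refine tendsto_of_tendsto_of_tendsto_of_le_of_le' tendsto_const_nhds hψ2 ?_ ?_
    · filter_upwards [self_mem_nhdsWithin] with ε hε
      rw [tsum_ite_ibox (mem_halfBox_iff hε a b)]
      simp only [add_sub_cancel_left]
      exact hT0 ε hε _
    · filter_upwards [self_mem_nhdsWithin] with ε hε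
      rw [tsum_ite_ibox (mem_halfBox_iff hε a b)]
      simp only [add_sub_cancel_left]
      exact le_add_of_nonneg_right (abs_nonneg _)
  · rw [tendsto_iff_dist_tendsto_zero]
    refine tendsto_of_tendsto_of_tendsto_of_le_of_le' tendsto_const_nhds hψ2
      (Eventually.of_forall fun _ => dist_nonneg) ?_
    filter_upwards [self_mem_nhdsWithin] with ε hε
    rw [energyE_box τ E0 V F (ψ ε) c ω a b hε, Real.dist_eq]
    exact le_add_of_nonneg_left (hT0 ε hε _)

theorem V_int (P : Measure Ω) [IsProbabilityMeasure P] (E0 : Finset (Zd d))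
    (p c₁ : ℝ) (hc₁ : 0 < c₁) (V : Zd d → Ω → Rn n → ℝ)
    (hVm : ∀ b ∈ E0, ∀ r, Measurable fun ω => V b ω r)
    (hVnn : ∀ b ∈ E0, ∀ (ω : Ω) (r : Rn n), 0 ≤ V b ω r)
    (lam : Zd d → Ω → ℝ)
    (hlammeas : ∀ b ∈ E0, Measurable (lam b))
    (hlamnn : ∀ b ∈ E0, ∀ ω : Ω, 0 ≤ lam b ω)
    (hg : ∀ b ∈ E0, ∀ (ω : Ω) (r : Rn n), V b ω r ≤ c₁ * (1 + lam b ω * (‖r‖ ^ p + 1)))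
    (α : ℝ) (hα : 1 ≤ α)
    (hmomα : ∀ b ∈ E0, ∫⁻ ω, ENNReal.ofReal (lam b ω ^ α) ∂P < ⊤) :
    ∀ b ∈ E0, ∀ r, Integrable (fun ω => V b ω r) P := by
  intro b hb r
  have h1 : Integrable (fun ω => lam b ω ^ α) P := by
    refine ⟨((hlammeas b hb).pow_const α).aestronglyMeasurable, ?_⟩
    rw [hasFiniteIntegral_iff_ofReal
      (Eventually.of_forall fun ω => Real.rpow_nonneg (hlamnn b hb ω) α)]
    exact hmomα b hb
  have h2 : Integrable (lam b) P := by
    refine ((integrable_const (1 : ℝ)).add h1).mono' (hlammeas b hb).aestronglyMeasurable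
      (Eventually.of_forall fun ω => ?_)
    have h0 := hlamnn b hb ω
    rw [Real.norm_of_nonneg h0]
    simp only [Pi.add_apply]
    rcases le_total (lam b ω) 1 with h | h
    · have := Real.rpow_nonneg h0 α
      linarith
    · have := Real.rpow_le_rpow_of_exponent_le h hα
      rw [Real.rpow_one] at this
      linarith
  have h3 : Integrable (fun ω => c₁ * (1 + lam b ω * (‖r‖ ^ p + 1))) P :=
    ((integrable_const (1 : ℝ)).add (h2.mul_const _)).const_mul c₁
  refine h3.mono' (hVm b hb r).aestronglyMeasurable (Eventually.of_forall fun ω => ?_)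
  rw [Real.norm_of_nonneg (hVnn b hb ω r)]
  exact hg b hb ω r

theorem W0_facts (P : Measure Ω) [IsProbabilityMeasure P] (τ : Zd d → Ω → Ω) (hτ0 : τ 0 = id)
    (hτmp : ∀ z : Zd d, MeasurePreserving (τ z) P P)
    (E0 : Finset (Zd d)) (V : Zd d → Ω → Rn n → ℝ) (F : Rd d →L[ℝ] Rn n)
    (hVnn : ∀ b ∈ E0, ∀ (ω : Ω) (r : Rn n), 0 ≤ V b ω r)
    (hVi : ∀ b ∈ E0, ∀ r, Integrable (fun ω => V b ω r) P) :
    W0 P τ E0 V F ≤ ∫ ω, locE E0 V F ω (fun _ => 0) ∂P := by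
  have h1 : W0 P τ E0 V F ≤ (((1 : ℕ) : ℝ) ^ d)⁻¹ * ∫ ω, mF τ E0 V ω F (cube d 1) ∂P := by
    refine ciInf_le (f := fun k : {k : ℕ // 0 < k} =>
      (((k : ℕ) : ℝ) ^ d)⁻¹ * ∫ ω, mF τ E0 V ω F (cube d k) ∂P) ⟨0, ?_⟩ ⟨1, one_pos⟩
    rintro _ ⟨k, rfl⟩
    exact mul_nonneg (by positivity) (integral_nonneg fun ω => mF_nonneg τ F hVnn _ ω)
  refine h1.trans ?_
  rw [Nat.cast_one, one_pow, inv_one, one_mul]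
  have h2 : ∀ ω, cellEn τ E0 V F 1 (fun _ => 0) ω = locE E0 V F ω (fun _ => 0) := by
    intro ω
    have : ibox (0 : Zd d) (fun _ => ((1 : ℕ) : ℤ)) = {0} := by
      ext z
      rw [mem_ibox, Finset.mem_singleton, funext_iff]
      refine forall_congr' fun i => ?_
      simp only [Pi.zero_apply]
      omega
    unfold cellEn
    rw [this, Finset.sum_singleton, hτ0]
    simp
  simp only [← h2]
  refine integral_mono_of_nonneg (Eventually.of_forall fun ω => mF_nonneg τ F hVnn _ ω)
    (cellEn_int P τ E0 V F hτmp hVi 1 _)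
    (Eventually.of_forall fun ω => mF_le τ F hVnn 1 ω (adm_zero E0 _))


/-- recovery sequence with prescribed affine boundary values,
Step 1 of the proof of Proposition 3.11. -/
theorem recovery_affine_bdry
    {d n : ℕ} (hd : 2 ≤ d) (hn : 1 ≤ n)
    {Ω : Type*} [MeasurableSpace Ω] (P : Measure Ω) [IsProbabilityMeasure P]
    (τ : Zd d → Ω → Ω) (hτ0 : τ 0 = id)
    (hτadd : ∀ x y : Zd d, τ (x + y) = τ x ∘ τ y)
    (hτmp : ∀ z : Zd d, MeasurePreserving (τ z) P P)
    (hτerg : ∀ B : Set Ω, MeasurableSet B → (∀ z : Zd d, τ z ⁻¹' B = B) → P B = 0 ∨ P B = 1)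
    (E0 : Finset (Zd d)) (hE00 : (0 : Zd d) ∉ E0) (hE0b : ∀ i : Fin d, stdb i ∈ E0)
    (p c₁ : ℝ) (hp : 1 < p) (hc₁ : 0 < c₁)
    (V : Zd d → Ω → Rn n → ℝ)
    (hVmeas : ∀ b ∈ E0, Measurable fun q : Ω × Rn n => V b q.1 q.2)
    (hVcont : ∀ b ∈ E0, ∀ ω : Ω, Continuous (V b ω))
    (hVnn : ∀ b ∈ E0, ∀ (ω : Ω) (r : Rn n), 0 ≤ V b ω r)
    (lam : Zd d → Ω → ℝ)
    (hlammeas : ∀ b ∈ E0, Measurable (lam b))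
    (hlamnn : ∀ b ∈ E0, ∀ ω : Ω, 0 ≤ lam b ω)
    (hgrowth : ∀ b ∈ E0, ∀ (ω : Ω) (r : Rn n),
      lam b ω * (‖r‖ ^ p / c₁ - c₁) ≤ V b ω r ∧ V b ω r ≤ c₁ * (1 + lam b ω * (‖r‖ ^ p + 1)))
    (α β : ℝ) (hα : 1 ≤ α) (hβ : 1 / (p - 1) ≤ β)
    (hmomα : ∀ b ∈ E0, ∫⁻ ω, ENNReal.ofReal (lam b ω ^ α) ∂P < ⊤)
    (hmomβ : ∀ i : Fin d, ∫⁻ ω, ENNReal.ofReal (lam (stdb i) ω) ^ (-β) ∂P < ⊤)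
    (h2T : (1 < α ∧ 1 / α + 1 / β ≤ p / (d : ℝ)) ∨
      (n = 1 ∧ ∃ q c₂ : ℝ, 1 < q ∧ q < p ∧ ∃ f : Zd d → Ω → Rn n → ℝ,
        ∀ b ∈ E0, ∀ ω : Ω,
          (∀ r : Rn n, 0 ≤ f b ω r) ∧
          ConvexOn ℝ Set.univ (fun r : Rn n => V b ω r + f b ω r) ∧
          (∀ r : Rn n, f b ω r ≤ c₂ * (1 + lam b ω * (‖r‖ ^ q + 1)))))
    (F : Rd d →L[ℝ] Rn n) :
    ∃ Ω' : Set Ω, MeasurableSet Ω' ∧ P Ω' = 1 ∧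
      ∀ ω ∈ Ω', ∀ c : Rn n, ∀ a b : Fin d → ℝ,
        ∃ u : ℝ → Zd d → Rn n,
          (∀ ε : ℝ, 0 < ε → ∀ z : Zd d,
            infDist (ε • toRd z) (halfBox a b)ᶜ ≤ ε * irange d E0 →
              u ε z = F (ε • toRd z) + c) ∧
          Tendsto (fun ε : ℝ => ε ^ d * ∑' z : Zd d,
              if ε • toRd z ∈ halfBox a b then
                ‖u ε z - (F (ε • toRd z) + c)‖ ^ (p * β / (β + 1)) else 0)
            (𝓝[>] (0 : ℝ)) (𝓝 0) ∧
          Tendsto (fun ε : ℝ => energyE τ E0 V ε ω (u ε) (halfBox a b))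
            (𝓝[>] (0 : ℝ)) (𝓝 ((volume (halfBox a b)).toReal * W0 P τ E0 V F)) := by
  have hVm : ∀ b ∈ E0, ∀ r, Measurable fun ω => V b ω r := fun b hb r =>
    (hVmeas b hb).comp (measurable_id.prodMk measurable_const)
  have hVi := V_int P E0 p c₁ hc₁ V hVm hVnn lam hlammeas hlamnn
    (fun b hb ω r => (hgrowth b hb ω r).2) α hα hmomα
  have hβ0 : 0 < β := lt_of_lt_of_le (by have : 0 < p - 1 := by linarith
                                         positivity) hβ
  have hs : 0 < p * β / (β + 1) := by positivity
  have hfam : ∀ m : ℕ, ∃ (k : ℕ) (φ : ℕ → Zd d → Rn n) (J : ℕ), 0 < k ∧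
      (∀ j, Adm E0 (cube d k) (φ j)) ∧
      ((k : ℝ) ^ d)⁻¹ * ∫ ω, runmin (fun j => cellEn τ E0 V F k (φ j)) J ω ∂P
        < W0 P τ E0 V F + 1 / ((m : ℝ) + 1) := by
    intro m
    haveI : Nonempty {k : ℕ // 0 < k} := ⟨⟨1, one_pos⟩⟩
    have hm : (0 : ℝ) < 1 / ((m : ℝ) + 1) := by positivity
    obtain ⟨⟨k, hk⟩, hlt⟩ := exists_lt_of_ciInf_lt (f := fun k : {k : ℕ // 0 < k} =>
      (((k : ℕ) : ℝ) ^ d)⁻¹ * ∫ ω, mF τ E0 V ω F (cube d k) ∂P)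
      (a := W0 P τ E0 V F + 1 / ((m : ℝ) + 1)) (lt_add_of_pos_right (W0 P τ E0 V F) hm)
    have hk' : (0 : ℝ) < (k : ℝ) ^ d := by positivity
    simp only at hlt
    rw [inv_mul_lt_iff₀ hk'] at hlt
    obtain ⟨φ, J, h1, h2⟩ := exists_family P τ hτmp E0 V F hVcont hVnn hVm hVi k _ hlt
    exact ⟨k, φ, J, hk, h1, by rwa [inv_mul_lt_iff₀ hk']⟩
  choose k φ J hk hφ hlt using hfam
  have hloc_m : Measurable (fun ω => locE E0 V F ω (fun _ => 0)) := by
    unfold locE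
    exact Finset.measurable_sum _ fun b hb => hVm b hb _
  have hloc_i : Integrable (fun ω => locE E0 V F ω (fun _ => 0)) P := by
    unfold locE
    exact integrable_finsetSum _ fun b hb => hVi b hb _
  have hae : ∀ᵐ ω ∂P, ErgAt P τ (fun ω => locE E0 V F ω (fun _ => 0)) ω ∧
      ∀ m, ErgAt P τ (runmin (fun j => cellEn τ E0 V F (k m) (φ m j)) (J m)) ω := by
    refine (ergodic_thm P τ hτ0 hτadd hτmp hτerg _ hloc_m hloc_i).and (ae_all_iff.mpr fun m => ?_)
    exact ergodic_thm P τ hτ0 hτadd hτmp hτerg _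
      (runmin_meas _ (fun j => cellEn_meas τ E0 V F (fun z => (hτmp z).measurable) hVm _ _) _)
      (runmin_integrable P _ (fun j => cellEn_int P τ E0 V F hτmp hVi _ _) _)
  obtain ⟨N, hN1, hN2, hN3⟩ := exists_measurable_superset_of_null (ae_iff.mp hae)
  refine ⟨Nᶜ, hN2.compl, (prob_compl_eq_one_iff hN2).mpr hN3, fun ω hω c a b => ?_⟩
  have hω' : ErgAt P τ (fun ω => locE E0 V F ω (fun _ => 0)) ω ∧
      ∀ m, ErgAt P τ (runmin (fun j => cellEn τ E0 V F (k m) (φ m j)) (J m)) ω := by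
    by_contra hcon
    exact hω (hN1 hcon)
  refine main_pt P (by omega) τ hτadd E0 V F hVcont hVnn ω (W0 P τ E0 V F) _ hs hω'.1
    (W0_facts P τ hτ0 hτmp E0 V F hVnn hVi) (fun η hη => ?_) c a b
  obtain ⟨m, hm⟩ := exists_nat_one_div_lt hη
  exact ⟨k m, φ m, J m, hk m, hφ m, hω'.2 m, (hlt m).trans (by linarith)⟩

end StochHom
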